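/- arXiv:1404.7694 — 7 statements merged into one kernel-verified Lean document; each statement's English description precedes it below -/
import Mathlib

section
/- Let d ≥ 2 be an integer and let x₁,…,x_d be positive real numbers. With e₁ = x₁+⋯+x_d and q(τ) = ∏_{i=1}^d (τ + x_i), the Shannon entropy satisfies the half-axis integral formula H(x₁,…,x_d) = ∫₀^∞ [ d − τ·q′(τ)/q(τ) − e₁/(τ+1) ] dτ, where the integral is over τ ∈ (0,∞). Equivalently, since d − τ q′(τ)/q(τ) = Σ_{i=1}^d x_i/(τ+x_i), H(x₁,…,x_d) = ∫₀^∞ [ Σ_{i=1}^d x_i/(τ+x_i) − e₁/(τ+1) ] dτ. -/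
/-!
Since the logarithmic derivative of `q` is `∑ 1 / (τ + xᵢ)`, the integrand is a sum over `i` of
`xᵢ / (τ + xᵢ) - xᵢ / (τ + 1)`. Each summand has the antiderivative
`xᵢ (log (τ + xᵢ) - log (τ + 1))`, which equals `xᵢ log xᵢ` at `0` and vanishes at infinity; without
the subtracted `xᵢ / (τ + 1)` the integral would diverge logarithmically.
-/

open MeasureTheory Real

section LogIntegral

open Filter Set Topology

theorem hasDerivAt_log_add_sub_log_add {a b t : ℝ} (ha : t + a ≠ 0) (hb : t + b ≠ 0) :
    HasDerivAt (fun τ => log (τ + a) - log (τ + b)) ((t + a)⁻¹ - (t + b)⁻¹) t := by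
  simpa only [one_div] using
    (((hasDerivAt_id' t).add_const a).log ha).fun_sub (((hasDerivAt_id' t).add_const b).log hb)

theorem tendsto_log_add_sub_log_add_atTop (a b : ℝ) :
    Tendsto (fun τ => log (τ + a) - log (τ + b)) atTop (𝓝 0) := by
  simpa only [sub_sub_sub_cancel_right, sub_zero] using
    (tendsto_log_comp_add_sub_log a).sub (tendsto_log_comp_add_sub_log b)

variable {a b c : ℝ}

theorem integrableOn_Ioi_inv_add_sub_inv_add (ha : 0 < c + a) (hb : 0 < c + b) :
    IntegrableOn (fun τ => (τ + a)⁻¹ - (τ + b)⁻¹) (Ioi c) := by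
  wlog hab : a ≤ b generalizing a b
  · simpa only [Pi.neg_def, neg_sub] using (this hb ha (le_of_not_ge hab)).neg
  refine integrableOn_Ioi_deriv_of_nonneg'
    (fun τ (hτ : c ≤ τ) => hasDerivAt_log_add_sub_log_add (by linarith) (by linarith))
    (fun τ (hτ : c < τ) => sub_nonneg.2 ?_) (tendsto_log_add_sub_log_add_atTop a b)
  exact inv_anti₀ (by linarith) (by linarith)

theorem integral_Ioi_inv_add_sub_inv_add (ha : 0 < c + a) (hb : 0 < c + b) :
    ∫ τ in Ioi c, ((τ + a)⁻¹ - (τ + b)⁻¹) = log (c + b) - log (c + a) := by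
  rw [integral_Ioi_of_hasDerivAt_of_tendsto'
    (fun τ (hτ : c ≤ τ) => hasDerivAt_log_add_sub_log_add (by linarith) (by linarith))
    (integrableOn_Ioi_inv_add_sub_inv_add ha hb) (tendsto_log_add_sub_log_add_atTop a b),
    zero_sub, neg_sub]

theorem integrableOn_Ioi_div_add_sub_div_add_one (ha : 0 ≤ a) :
    IntegrableOn (fun τ => a / (τ + a) - a / (τ + 1)) (Ioi 0) := by
  obtain rfl | ha := ha.eq_or_lt
  · simp only [zero_div, sub_zero, integrableOn_zero]
  simpa only [IntegrableOn, div_eq_mul_inv, mul_sub] using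
    (integrableOn_Ioi_inv_add_sub_inv_add (c := 0) (b := 1) (by simpa) (by simp)).const_mul a

theorem integral_Ioi_div_add_sub_div_add_one (ha : 0 ≤ a) :
    ∫ τ in Ioi 0, (a / (τ + a) - a / (τ + 1)) = negMulLog a := by
  obtain rfl | ha := ha.eq_or_lt
  · simp only [zero_div, sub_zero, integral_zero, negMulLog_zero]
  calc ∫ τ in Ioi 0, (a / (τ + a) - a / (τ + 1))
      = a * ∫ τ in Ioi 0, ((τ + a)⁻¹ - (τ + 1)⁻¹) := by
        simp only [div_eq_mul_inv, ← mul_sub, integral_const_mul]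
    _ = a * (log (0 + 1) - log (0 + a)) := by
        rw [integral_Ioi_inv_add_sub_inv_add (by simpa) (by simp)]
    _ = negMulLog a := by simp [negMulLog]

end LogIntegral

section Entropy

variable {ι : Type*} {s : Finset ι}

theorem card_sub_mul_logDeriv_prod_add {𝕜 : Type*} [NontriviallyNormedField 𝕜] {x : ι → 𝕜} {t : 𝕜}
    (ht : ∀ i ∈ s, t + x i ≠ 0) :
    s.card - t * logDeriv (fun τ => ∏ i ∈ s, (τ + x i)) t = ∑ i ∈ s, x i / (t + x i) := by
  have logDeriv_add (i : ι) : logDeriv (fun τ => τ + x i) t = (t + x i)⁻¹ := by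
    simp [logDeriv_apply]
  have one_sub_mul_inv : ∀ i ∈ s, 1 - t * (t + x i)⁻¹ = x i / (t + x i) := fun i hi => by
    field_simp [ht i hi]
    ring
  rw [logDeriv_prod ht fun i _ => by fun_prop]
  simp only [logDeriv_add, Finset.mul_sum, ← Finset.sum_congr rfl one_sub_mul_inv,
    Finset.sum_sub_distrib, Finset.sum_const, nsmul_one]

theorem sum_negMulLog_eq_integral {x : ι → ℝ} (hx : ∀ i ∈ s, 0 ≤ x i) :
    ∑ i ∈ s, negMulLog (x i) =
      ∫ τ in Set.Ioi (0 : ℝ), ((∑ i ∈ s, x i / (τ + x i)) - (∑ i ∈ s, x i) / (τ + 1)) := by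
  simp only [Finset.sum_div, ← Finset.sum_sub_distrib]
  rw [integral_finsetSum s fun i hi => integrableOn_Ioi_div_add_sub_div_add_one (hx i hi)]
  exact Finset.sum_congr rfl fun i hi => (integral_Ioi_div_add_sub_div_add_one (hx i hi)).symm

theorem entropy_half_axis_formula_general {x : ι → ℝ} (hx : ∀ i ∈ s, 0 ≤ x i) :
    ∑ i ∈ s, negMulLog (x i) =
      ∫ τ in Set.Ioi (0 : ℝ),
        (s.card - τ * deriv (fun t => ∏ i ∈ s, (t + x i)) τ / (∏ i ∈ s, (τ + x i))
          - (∑ i ∈ s, x i) / (τ + 1)) ∧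
    ∑ i ∈ s, negMulLog (x i) =
      ∫ τ in Set.Ioi (0 : ℝ), ((∑ i ∈ s, x i / (τ + x i)) - (∑ i ∈ s, x i) / (τ + 1)) := by
  refine ⟨?_, sum_negMulLog_eq_integral hx⟩
  rw [sum_negMulLog_eq_integral hx]
  refine setIntegral_congr_fun measurableSet_Ioi fun τ (hτ : 0 < τ) => ?_
  have hne : ∀ i ∈ s, τ + x i ≠ 0 := fun i hi => (add_pos_of_pos_of_nonneg hτ (hx i hi)).ne'
  simp only [← card_sub_mul_logDeriv_prod_add hne, logDeriv_apply, mul_div_assoc]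

end Entropy

/-- **Half-axis formula for the Shannon entropy.**
For `d ≥ 2` and positive reals `x₁, …, x_d`, with `e₁ = Σ xᵢ` and
`q(τ) = ∏ (τ + xᵢ)`, one has
`H(x) = ∫₀^∞ [ d − τ q'(τ)/q(τ) − e₁/(τ+1) ] dτ`, and equivalently
`H(x) = ∫₀^∞ [ Σ xᵢ/(τ+xᵢ) − e₁/(τ+1) ] dτ`. -/
theorem entropy_half_axis_formula (d : ℕ) (hd : 2 ≤ d) (x : Fin d → ℝ)
    (hx : ∀ i, 0 < x i) :
    (-∑ i, x i * Real.log (x i)) =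
      ∫ τ in Set.Ioi (0 : ℝ),
        ((d : ℝ) - τ * deriv (fun s : ℝ => ∏ i, (s + x i)) τ / (∏ i, (τ + x i))
          - (∑ i, x i) / (τ + 1)) ∧
    (-∑ i, x i * Real.log (x i)) =
      ∫ τ in Set.Ioi (0 : ℝ),
        ((∑ i, x i / (τ + x i)) - (∑ i, x i) / (τ + 1)) := by
  simpa only [negMulLog_eq_neg, Finset.sum_neg_distrib, Finset.card_univ, Fintype.card_fin] using
    entropy_half_axis_formula_general (s := Finset.univ) fun i _ => (hx i).le
end

section
/- Let d ≥ 2 be an integer and let x₁,…,x_d be positive real numbers. With e₁ = x₁+⋯+x_d and q(τ) = ∏_{i=1}^d (τ + x_i), the Shannon entropy satisfies H(x₁,…,x_d) = ∫₀^∞ [ ln q(τ) + (e₁ − d) ln τ − e₁ ln(τ+1) ] dτ, where the integral is over τ ∈ (0,∞). -/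
open MeasureTheory Real

/-!
With `e₁ = ∑ xᵢ` and one copy of `-log τ` for each index, the integrand splits as `∑ K xᵢ τ`, where
`K y τ = log (τ + y) + (y - 1) log τ - y log (τ + 1) = log (1 + y / τ) - y log (1 + 1 / τ)`.
By Bernoulli's inequality `K y` has constant sign on the half-axis: nonnegative for `y ≤ 1`,
nonpositive for `1 ≤ y`. Its primitive built from `u ↦ u log u` is continuous up to `0`, where it
equals `y log y`, and vanishes at infinity. Hence `K y` is integrable, with integral `-y log y`.
-/

open Set Filter Topology

/-- The contribution of a single variable `y` to the integrand of the half-axis formula. It is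
kept in expanded form; `entropyKernel_eq_log_one_add` is the form that exhibits its sign and its
decay. -/
noncomputable def entropyKernel (y t : ℝ) : ℝ :=
  log (t + y) + (y - 1) * log t - y * log (t + 1)

/-- The primitive of `entropyKernel y` that vanishes at infinity, written with
`negMulLog u = -u * log u`, which is continuous at `0`. -/
noncomputable def entropyPrimitive (y t : ℝ) : ℝ :=
  y * negMulLog (t + 1) - negMulLog (t + y) - (y - 1) * negMulLog t

section Kernel

variable {y t : ℝ}

lemma entropyKernel_eq_log_one_add (ht : 0 < t) (hty : 0 < t + y) :
    entropyKernel y t = log (1 + y / t) - y * log (1 + 1 / t) := by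
  have log_one_add_div {a : ℝ} (ha : 0 < t + a) : log (1 + a / t) = log (t + a) - log t := by
    rw [one_add_div ht.ne', log_div ha.ne' ht.ne']
  rw [log_one_add_div hty, log_one_add_div (by positivity), entropyKernel]
  ring

lemma entropyKernel_nonneg (hy₀ : 0 ≤ y) (hy₁ : y ≤ 1) (ht : 0 < t) :
    0 ≤ entropyKernel y t := by
  have bernoulli : (1 + 1 / t) ^ y ≤ 1 + y * (1 / t) :=
    rpow_one_add_le_one_add_mul_self (by linarith [one_div_pos.2 ht]) hy₀ hy₁
  rw [entropyKernel_eq_log_one_add ht (by positivity), sub_nonneg,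
    ← log_rpow (by positivity), ← mul_one_div y t]
  exact log_le_log (by positivity) bernoulli

lemma entropyKernel_nonpos (hy : 1 ≤ y) (ht : 0 < t) : entropyKernel y t ≤ 0 := by
  have bernoulli : 1 + y * (1 / t) ≤ (1 + 1 / t) ^ y :=
    one_add_mul_self_le_rpow_one_add (by linarith [one_div_pos.2 ht]) hy
  rw [entropyKernel_eq_log_one_add ht (by positivity), sub_nonpos,
    ← log_rpow (by positivity), ← mul_one_div y t]
  exact log_le_log (by positivity) bernoulli

lemma tendsto_mul_entropyKernel_atTop (y : ℝ) :
    Tendsto (fun t ↦ t * entropyKernel y t) atTop (𝓝 0) := by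
  have h : Tendsto (fun t ↦ t * log (1 + y / t) - y * (t * log (1 + 1 / t))) atTop
      (𝓝 (y - y * 1)) :=
    (tendsto_mul_log_one_add_div_atTop y).sub
      ((tendsto_mul_log_one_add_div_atTop 1).const_mul y)
  rw [mul_one, sub_self] at h
  refine h.congr' ?_
  filter_upwards [eventually_gt_atTop 0, eventually_gt_atTop (-y)] with t ht hty
  rw [entropyKernel_eq_log_one_add ht (by linarith)]
  ring

end Kernel

section Primitive

lemma continuous_entropyPrimitive (y : ℝ) : Continuous (entropyPrimitive y) := by
  unfold entropyPrimitive
  fun_prop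

lemma entropyPrimitive_zero (y : ℝ) : entropyPrimitive y 0 = -negMulLog y := by
  simp [entropyPrimitive]

lemma hasDerivAt_entropyPrimitive {y t : ℝ} (ht : 0 < t) (hty : 0 < t + y) :
    HasDerivAt (entropyPrimitive y) (entropyKernel y t) t := by
  have h_one : HasDerivAt (fun u ↦ negMulLog (u + 1)) (-log (t + 1) - 1) t :=
    (hasDerivAt_negMulLog (by positivity)).comp_add_const t 1
  have h_y : HasDerivAt (fun u ↦ negMulLog (u + y)) (-log (t + y) - 1) t :=
    (hasDerivAt_negMulLog hty.ne').comp_add_const t y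
  refine (((h_one.const_mul y).sub h_y).sub
    ((hasDerivAt_negMulLog ht.ne').const_mul (y - 1))).congr_deriv ?_
  rw [entropyKernel]
  ring

lemma entropyPrimitive_eq_mul_entropyKernel_add (y t : ℝ) :
    entropyPrimitive y t = t * entropyKernel y t + y * (log (t + y) - log (t + 1)) := by
  simp only [entropyPrimitive, entropyKernel, negMulLog]
  ring

lemma tendsto_entropyPrimitive_atTop (y : ℝ) :
    Tendsto (entropyPrimitive y) atTop (𝓝 0) := by
  have h_log : Tendsto (fun t ↦ log (t + y) - log (t + 1)) atTop (𝓝 0) := by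
    simpa using (tendsto_log_comp_add_sub_log y).sub (tendsto_log_comp_add_sub_log 1)
  simpa [← entropyPrimitive_eq_mul_entropyKernel_add] using
    (tendsto_mul_entropyKernel_atTop y).add (h_log.const_mul y)

end Primitive

section Integral

lemma integrableOn_entropyKernel {y : ℝ} (hy : 0 ≤ y) :
    IntegrableOn (entropyKernel y) (Ioi 0) := by
  have h_cont := (continuous_entropyPrimitive y).continuousWithinAt (s := Ici 0) (x := 0)
  have h_deriv : ∀ t ∈ Ioi (0 : ℝ), HasDerivAt (entropyPrimitive y) (entropyKernel y t) t :=
    fun t ht ↦ hasDerivAt_entropyPrimitive ht (add_pos_of_pos_of_nonneg ht hy)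
  have h_lim := tendsto_entropyPrimitive_atTop y
  rcases le_total y 1 with hy₁ | hy₁
  · exact integrableOn_Ioi_deriv_of_nonneg h_cont h_deriv
      (fun t ht ↦ entropyKernel_nonneg hy hy₁ ht) h_lim
  · exact integrableOn_Ioi_deriv_of_nonpos h_cont h_deriv
      (fun t ht ↦ entropyKernel_nonpos hy₁ ht) h_lim

lemma integral_entropyKernel {y : ℝ} (hy : 0 ≤ y) :
    ∫ t in Ioi 0, entropyKernel y t = negMulLog y := by
  rw [integral_Ioi_of_hasDerivAt_of_tendsto
    (continuous_entropyPrimitive y).continuousWithinAt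
    (fun t ht ↦ hasDerivAt_entropyPrimitive ht (add_pos_of_pos_of_nonneg ht hy))
    (integrableOn_entropyKernel hy) (tendsto_entropyPrimitive_atTop y),
    entropyPrimitive_zero, zero_sub, neg_neg]

variable {ι : Type*} {s : Finset ι} {x : ι → ℝ}

lemma integral_sum_entropyKernel (hx : ∀ i ∈ s, 0 ≤ x i) :
    ∫ t in Ioi 0, ∑ i ∈ s, entropyKernel (x i) t = ∑ i ∈ s, negMulLog (x i) := by
  rw [integral_finsetSum s fun i hi ↦ integrableOn_entropyKernel (hx i hi)]
  exact Finset.sum_congr rfl fun i hi ↦ integral_entropyKernel (hx i hi)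

lemma sum_entropyKernel {t : ℝ} (h : ∀ i ∈ s, t + x i ≠ 0) :
    ∑ i ∈ s, entropyKernel (x i) t =
      log (∏ i ∈ s, (t + x i)) + ((∑ i ∈ s, x i) - s.card) * log t
        - (∑ i ∈ s, x i) * log (t + 1) := by
  simp [entropyKernel, log_prod h, Finset.sum_sub_distrib, Finset.sum_add_distrib,
    ← Finset.sum_mul]

end Integral

/-- **Logarithmic half-axis formula for the Shannon entropy.**
For `d ≥ 2` and positive reals `x₁, …, x_d`, with `e₁ = Σ xᵢ` and
`q(τ) = ∏ (τ + xᵢ)`, one has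
`H(x) = ∫₀^∞ [ ln q(τ) + (e₁ − d) ln τ − e₁ ln(τ+1) ] dτ`. -/
theorem entropy_log_half_axis_formula (d : ℕ) (hd : 2 ≤ d) (x : Fin d → ℝ)
    (hx : ∀ i, 0 < x i) :
    (-∑ i, x i * Real.log (x i)) =
      ∫ τ in Set.Ioi (0 : ℝ),
        (Real.log (∏ i, (τ + x i)) + ((∑ i, x i) - (d : ℝ)) * Real.log τ
          - (∑ i, x i) * Real.log (τ + 1)) := by
  calc
    -∑ i, x i * log (x i) = ∑ i, negMulLog (x i) := by
      simp only [negMulLog_eq_neg, Finset.sum_neg_distrib]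
    _ = ∫ τ in Ioi 0, ∑ i, entropyKernel (x i) τ :=
      (integral_sum_entropyKernel fun i _ ↦ (hx i).le).symm
    _ = _ := setIntegral_congr_fun measurableSet_Ioi fun τ hτ ↦ by
      simpa only [Finset.card_univ, Fintype.card_fin] using
        sum_entropyKernel (s := Finset.univ) fun i _ ↦ (add_pos hτ (hx i)).ne'
end

section
/- Let d ≥ 2 be an integer, let x₁,…,x_d be positive real numbers with e₁ = x₁+⋯+x_d, and let q(τ) = ∏_{i=1}^d (τ + x_i). Then for every integer k with 2 ≤ k ≤ d, ∫₀^∞ τ^{d−k}/q(τ) dτ ≥ d^{k−1} / ( (d−k+1) · binom(d−1, k−2) · e₁^{k−1} ) > 0. (That is, the partial derivative ∂H/∂e_k of the entropy with respect to the k-th elementary symmetric polynomial is bounded below by the positive constant c_{d,k} = d^{k−1}/((d−k+1)·binom(d−1,k−2)·e₁^{k−1}).) -/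
open MeasureTheory Real

/-!
By AM–GM, `∏ i, (τ + xᵢ) ≤ (τ + a) ^ d` with `a = e₁ / d`, so the integral is smallest when all `xᵢ`
are equal to their mean. In that case it is a beta integral, evaluated by the recursion
`n ∫ τ ^ (m + 1) / (τ + a) ^ (n + 1) = (m + 1) ∫ τ ^ m / (τ + a) ^ n`, which comes from integrating
the derivative of `τ ^ (m + 1) / (τ + a) ^ n` over the half-axis.
-/

open Filter Finset Topology

section BetaIntegral

variable {a : ℝ} {m n : ℕ}

lemma pow_div_add_pow_le_inv_pow {t : ℝ} (ha : 0 < a) (ht : 0 ≤ t) (hmn : m ≤ n) :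
    t ^ m / (t + a) ^ n ≤ ((t + a) ^ (n - m))⁻¹ := by
  have hta : 0 < t + a := by positivity
  calc t ^ m / (t + a) ^ n ≤ (t + a) ^ m / (t + a) ^ n := by gcongr; linarith
    _ = ((t + a) ^ (n - m))⁻¹ := by
      rw [pow_sub₀ _ hta.ne' hmn, mul_inv, inv_inv, div_eq_inv_mul]

lemma tendsto_pow_div_add_pow_atTop (ha : 0 < a) (hmn : m < n) :
    Tendsto (fun t : ℝ ↦ t ^ m / (t + a) ^ n) atTop (𝓝 0) := by
  have hinv : Tendsto (fun t : ℝ ↦ ((t + a) ^ (n - m))⁻¹) atTop (𝓝 0) :=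
    tendsto_inv_atTop_zero.comp <| (tendsto_pow_atTop (Nat.sub_ne_zero_of_lt hmn)).comp <|
      tendsto_atTop_add_const_right _ a tendsto_id
  refine squeeze_zero' ?_ ?_ hinv <;> filter_upwards [eventually_ge_atTop 0] with t ht
  · positivity
  · exact pow_div_add_pow_le_inv_pow ha ht hmn.le

lemma integrableOn_pow_div_add_pow (ha : 0 < a) (hmn : m + 2 ≤ n) :
    IntegrableOn (fun t : ℝ ↦ t ^ m / (t + a) ^ n) (Set.Ioi 0) := by
  have hexp : -((n - m : ℕ) : ℝ) < -1 := by
    rw [neg_lt_neg_iff]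
    exact_mod_cast (by lia : 1 < n - m)
  refine (integrableOn_add_rpow_Ioi_of_lt hexp (neg_lt_zero.2 ha)).mono'
    (Measurable.aestronglyMeasurable (by fun_prop)) ?_
  filter_upwards [ae_restrict_mem measurableSet_Ioi] with t (ht : 0 < t)
  rw [norm_of_nonneg (by positivity), rpow_neg (by positivity), rpow_natCast]
  exact pow_div_add_pow_le_inv_pow ha ht.le (by lia)

lemma hasDerivAt_pow_div_add_pow {t : ℝ} (hta : t + a ≠ 0) :
    HasDerivAt (fun t : ℝ ↦ t ^ m / (t + a) ^ n)
      (m * (t ^ (m - 1) / (t + a) ^ n) - n * (t ^ m / (t + a) ^ (n + 1))) t := by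
  have hdenom : HasDerivAt (fun t : ℝ ↦ (t + a) ^ n) (n * (t + a) ^ (n - 1)) t := by
    simpa [Pi.pow_def] using ((hasDerivAt_id t).add_const a).pow n
  refine ((hasDerivAt_pow m t).div hdenom (pow_ne_zero n hta)).congr_deriv ?_
  cases n with
  | zero => simp
  | succ n =>
    rw [Nat.add_sub_cancel]
    field_simp
    ring

lemma integral_inv_add_pow (ha : 0 < a) (n : ℕ) :
    ∫ t in Set.Ioi (0 : ℝ), 1 / (t + a) ^ (n + 2) = 1 / ((n + 1) * a ^ (n + 1)) := by
  have hderiv (t : ℝ) (ht : t ∈ Set.Ici 0) :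
      HasDerivAt (fun t : ℝ ↦ 1 / (t + a) ^ (n + 1)) (-((n + 1) * (1 / (t + a) ^ (n + 2)))) t := by
    have hta : t + a ≠ 0 := (add_pos_of_nonneg_of_pos ht ha).ne'
    simpa [add_assoc] using hasDerivAt_pow_div_add_pow (m := 0) (n := n + 1) hta
  have hint : IntegrableOn (fun t : ℝ ↦ 1 / (t + a) ^ (n + 2)) (Set.Ioi 0) := by
    simpa using integrableOn_pow_div_add_pow (m := 0) ha (by lia : 0 + 2 ≤ n + 2)
  have hlim : Tendsto (fun t : ℝ ↦ 1 / (t + a) ^ (n + 1)) atTop (𝓝 0) := by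
    simpa using tendsto_pow_div_add_pow_atTop (m := 0) ha n.succ_pos
  have hFTC := integral_Ioi_of_hasDerivAt_of_tendsto' hderiv (hint.const_mul (n + 1 : ℝ)).neg hlim
  rw [integral_neg, integral_const_mul, zero_add, zero_sub, neg_inj] at hFTC
  rw [← div_div, div_right_comm, ← hFTC, mul_div_cancel_left₀ _ (by positivity)]

lemma integral_pow_succ_div_add_pow_succ (ha : 0 < a) (hmn : m + 2 ≤ n) :
    n * ∫ t in Set.Ioi (0 : ℝ), t ^ (m + 1) / (t + a) ^ (n + 1) =
      (m + 1) * ∫ t in Set.Ioi (0 : ℝ), t ^ m / (t + a) ^ n := by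
  have hderiv (t : ℝ) (ht : t ∈ Set.Ici 0) : HasDerivAt (fun t : ℝ ↦ t ^ (m + 1) / (t + a) ^ n)
      ((m + 1) * (t ^ m / (t + a) ^ n) - n * (t ^ (m + 1) / (t + a) ^ (n + 1))) t := by
    have hta : t + a ≠ 0 := (add_pos_of_nonneg_of_pos ht ha).ne'
    simpa using hasDerivAt_pow_div_add_pow (m := m + 1) (n := n) hta
  have hint := (integrableOn_pow_div_add_pow ha hmn).const_mul (m + 1 : ℝ)
  have hint' :=
    (integrableOn_pow_div_add_pow ha (by lia : m + 1 + 2 ≤ n + 1)).const_mul (n : ℝ)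
  have hFTC := integral_Ioi_of_hasDerivAt_of_tendsto' hderiv (hint.sub hint')
    (tendsto_pow_div_add_pow_atTop ha hmn)
  rw [integral_sub hint hint', integral_const_mul, integral_const_mul, zero_pow m.succ_ne_zero,
    zero_div, sub_zero, sub_eq_zero] at hFTC
  exact hFTC.symm

lemma integral_pow_div_add_pow (ha : 0 < a) (m j : ℕ) :
    ∫ t in Set.Ioi (0 : ℝ), t ^ m / (t + a) ^ (m + j + 2) =
      1 / ((m + 1) * (m + j + 1).choose j * a ^ (j + 1)) := by
  induction m with
  | zero => simpa using integral_inv_add_pow ha j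
  | succ m ih =>
    have hrec := integral_pow_succ_div_add_pow_succ ha (by lia : m + 2 ≤ m + j + 2)
    have hchoose : ((m + j + 1).choose j * (m + j + 2) : ℝ) = (m + j + 2).choose j * (m + 2) := by
      have h := Nat.choose_mul_succ_eq (m + j + 1) j
      rw [show m + j + 1 + 1 - j = m + 2 by lia] at h
      exact_mod_cast h
    have hpos : (0 : ℝ) < (m + j + 1).choose j := by exact_mod_cast Nat.choose_pos (by lia)
    have hpos' : (0 : ℝ) < (m + j + 2).choose j := by exact_mod_cast Nat.choose_pos (by lia)
    rw [ih] at hrec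
    rw [show m + 1 + j + 2 = m + j + 2 + 1 by lia, show m + 1 + j + 1 = m + j + 2 by lia]
    refine mul_left_cancel₀ (by positivity : ((m + j + 2 : ℕ) : ℝ) ≠ 0) (hrec.trans ?_)
    push_cast
    field_simp
    linear_combination -hchoose

end BetaIntegral

section MeanComparison

variable {ι : Type*} {s : Finset ι} {x : ι → ℝ} {m : ℕ}

lemma prod_le_arith_mean_pow_card (hx : ∀ i ∈ s, 0 ≤ x i) :
    ∏ i ∈ s, x i ≤ ((∑ i ∈ s, x i) / #s) ^ #s := by
  rcases s.eq_empty_or_nonempty with rfl | hs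
  · simp
  have hmean : (∏ i ∈ s, x i) ^ (#s : ℝ)⁻¹ ≤ (∑ i ∈ s, x i) / #s := by
    simpa using geom_mean_le_arith_mean s 1 x (by simp) (by simpa using hs) hx
  calc ∏ i ∈ s, x i = ((∏ i ∈ s, x i) ^ (#s : ℝ)⁻¹) ^ #s :=
        (rpow_inv_natCast_pow (prod_nonneg hx) hs.card_ne_zero).symm
    _ ≤ ((∑ i ∈ s, x i) / #s) ^ #s := by
      have := prod_nonneg hx
      gcongr

lemma prod_add_le_add_mean_pow_card {t : ℝ} (hx : ∀ i ∈ s, 0 ≤ t + x i) :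
    ∏ i ∈ s, (t + x i) ≤ (t + (∑ i ∈ s, x i) / #s) ^ #s := by
  rcases s.eq_empty_or_nonempty with rfl | hs
  · simp
  have hcard : (#s : ℝ) ≠ 0 := Nat.cast_ne_zero.2 hs.card_ne_zero
  simpa [sum_add_distrib, add_div, hcard] using prod_le_arith_mean_pow_card hx

lemma integrableOn_pow_div_prod_add (hx : ∀ i ∈ s, 0 < x i) (hm : m + 2 ≤ #s) :
    IntegrableOn (fun t : ℝ ↦ t ^ m / ∏ i ∈ s, (t + x i)) (Set.Ioi 0) := by
  obtain ⟨i₀, hi₀, hmin⟩ := s.exists_min_image x (card_pos.1 (by lia))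
  have hx₀ := hx i₀ hi₀
  refine (integrableOn_pow_div_add_pow hx₀ hm).mono'
    (Measurable.aestronglyMeasurable (by fun_prop)) ?_
  filter_upwards [ae_restrict_mem measurableSet_Ioi] with t (ht : 0 < t)
  have hprod : (t + x i₀) ^ #s ≤ ∏ i ∈ s, (t + x i) := by
    rw [← prod_const]
    gcongr with i hi
    exact hmin i hi
  rw [norm_of_nonneg (div_nonneg (by positivity) (le_trans (by positivity) hprod))]
  gcongr

lemma integral_pow_div_add_mean_pow_le (hx : ∀ i ∈ s, 0 < x i) (hm : m + 2 ≤ #s) :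
    ∫ t in Set.Ioi (0 : ℝ), t ^ m / (t + (∑ i ∈ s, x i) / #s) ^ #s ≤
      ∫ t in Set.Ioi (0 : ℝ), t ^ m / ∏ i ∈ s, (t + x i) := by
  have hs : s.Nonempty := card_pos.1 (by lia)
  have hmean : 0 < (∑ i ∈ s, x i) / #s :=
    div_pos (sum_pos hx hs) (Nat.cast_pos.2 hs.card_pos)
  refine setIntegral_mono_on (integrableOn_pow_div_add_pow hmean hm)
    (integrableOn_pow_div_prod_add hx hm) measurableSet_Ioi fun t (ht : 0 < t) ↦ ?_
  have htx (i : ι) (hi : i ∈ s) : 0 < t + x i := add_pos ht (hx i hi)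
  have hprod : 0 < ∏ i ∈ s, (t + x i) := prod_pos htx
  gcongr
  exact prod_add_le_add_mean_pow_card fun i hi ↦ (htx i hi).le

end MeanComparison

/-- **Positive lower bound on `∂H/∂e_k`.**
For `d ≥ 2`, positive reals `x₁, …, x_d` with `e₁ = Σ xᵢ`,
`q(τ) = ∏ (τ + xᵢ)`, and `2 ≤ k ≤ d`, the half-axis integral for `∂H/∂e_k`
satisfies `∫₀^∞ τ^{d−k}/q(τ) dτ ≥ c_{d,k} > 0` where
`c_{d,k} = d^{k−1}/((d−k+1)·C(d−1,k−2)·e₁^{k−1})`. -/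
theorem entropy_partial_lower_bound (d k : ℕ) (hd : 2 ≤ d) (hk2 : 2 ≤ k) (hkd : k ≤ d)
    (x : Fin d → ℝ) (hx : ∀ i, 0 < x i) :
    0 < (d : ℝ) ^ (k - 1) /
        (((d - k + 1 : ℕ) : ℝ) * ((d - 1).choose (k - 2) : ℝ) * (∑ i, x i) ^ (k - 1)) ∧
    (d : ℝ) ^ (k - 1) /
        (((d - k + 1 : ℕ) : ℝ) * ((d - 1).choose (k - 2) : ℝ) * (∑ i, x i) ^ (k - 1)) ≤
      ∫ τ in Set.Ioi (0 : ℝ), τ ^ (d - k) / (∏ i, (τ + x i)) := by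
  obtain ⟨j, rfl⟩ := Nat.exists_eq_add_of_le' hk2
  obtain ⟨m, rfl⟩ : ∃ m, d = m + j + 2 := Nat.exists_eq_add_of_le' hkd
  rw [show m + j + 2 - (j + 2) = m by lia, show m + j + 2 - 1 = m + j + 1 by lia,
    show j + 2 - 1 = j + 1 by lia, show j + 2 - 2 = j by lia]
  have hsum : 0 < ∑ i, x i := sum_pos (fun i _ ↦ hx i) univ_nonempty
  have hchoose : 0 < (m + j + 1).choose j := Nat.choose_pos (by lia)
  refine ⟨by positivity, ?_⟩
  have hmean : 0 < (∑ i, x i) / (m + j + 2 : ℕ) := by positivity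
  calc
    _ = 1 / ((m + 1) * (m + j + 1).choose j * ((∑ i, x i) / (m + j + 2 : ℕ)) ^ (j + 1)) := by
      rw [div_pow]
      push_cast
      field_simp
    _ = ∫ τ in Set.Ioi (0 : ℝ), τ ^ m / (τ + (∑ i, x i) / (m + j + 2 : ℕ)) ^ (m + j + 2) :=
      (integral_pow_div_add_pow hmean m j).symm
    _ ≤ ∫ τ in Set.Ioi (0 : ℝ), τ ^ m / ∏ i, (τ + x i) := by
      simpa only [card_univ, Fintype.card_fin] using
        integral_pow_div_add_mean_pow_le (m := m) (fun i (_ : i ∈ univ) ↦ hx i) (by simp)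
end

section
/- Let d ≥ 2 be an integer and let e₁,…,e_d be positive reals, with q_e(τ) = τ^d + Σ_{k=1}^d e_k τ^{d−k}. Let F(e₁,…,e_d) = ∫₀^∞ [ d − τ·q_e′(τ)/q_e(τ) − e₁/(τ+1) ] dτ and G(e₁,…,e_d) = ∫₀^∞ [ 1 − τ^d/q_e(τ) − e₁/(τ+1) ] dτ (entropy and subentropy as functions of the elementary symmetric polynomials). Then for any integers l, m ≥ 1 with k := l + m ≤ d: (i) the partial derivative of G with respect to e_k at (e₁,…,e_d) equals ∫₀^∞ τ^{2d−k}/q_e(τ)² dτ; (ii) the second mixed partial derivative of F with respect to e_l and e_m at (e₁,…,e_d) equals −∫₀^∞ τ^{2d−l−m}/q_e(τ)² dτ; consequently −∂G/∂e_k = ∂²F/∂e_l∂e_m whenever k = l + m. -/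
open MeasureTheory Real

/-- The polynomial `q_e(τ) = τ^d + Σ_{k=1}^d e_k τ^{d−k}`, where the coordinate
`i : Fin d` of `e` stores the elementary symmetric polynomial `e_{i+1}`. -/
noncomputable def qe (d : ℕ) (e : Fin d → ℝ) (τ : ℝ) : ℝ :=
  τ ^ d + ∑ i, e i * τ ^ (d - 1 - (i : ℕ))

/-- The entropy `H` as a function of the elementary symmetric polynomials:
`F(e) = ∫₀^∞ [ d − τ q_e'(τ)/q_e(τ) − e₁/(τ+1) ] dτ`. -/
noncomputable def entF (d : ℕ) (hd : 2 ≤ d) (e : Fin d → ℝ) : ℝ :=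
  ∫ τ in Set.Ioi (0 : ℝ),
    ((d : ℝ) - τ * deriv (qe d e) τ / qe d e τ - e ⟨0, by omega⟩ / (τ + 1))

/-- The subentropy `Q` as a function of the elementary symmetric polynomials:
`G(e) = ∫₀^∞ [ 1 − τ^d/q_e(τ) − e₁/(τ+1) ] dτ`. -/
noncomputable def subQ (d : ℕ) (hd : 2 ≤ d) (e : Fin d → ℝ) : ℝ :=
  ∫ τ in Set.Ioi (0 : ℝ),
    (1 - τ ^ d / qe d e τ - e ⟨0, by omega⟩ / (τ + 1))

/-! Up to the term `e₁ / (τ + 1)`, both integrands are weighted Euler operators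
`∑ w_i e_i ∂/∂e_i` applied to `log q_e(τ)`: the weights are `w_i = 1` for `G`, because
`q_e(τ) - τ^d` is linear in `e`, and `w_i = i` for `F`, because `q_e(τ)` is homogeneous of
degree `d` when `e_i` has weight `i` and `τ` has weight `1`.

Substituting `s = 1 / (τ + 1)` turns `q_e(τ) / (τ + 1) ^ d` into a polynomial on the compact
interval `[0, 1]`, so `c (τ + 1) ^ d ≤ q_e(τ)` for all `τ ≥ 0`, uniformly for `e` in a
neighbourhood. Hence the integrands and their partial derivatives are `O((τ + 1)⁻²)` locally
uniformly in `e`, and one may differentiate under the integral sign.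

For `G` the derivative of the integrand is the claimed one. For `F`, homogeneity makes the second
partial derivative of the integrand equal to `τ · d/dτ (τ ^ (2 d - l - m) / q_e(τ) ^ 2)`, and an
integration by parts yields the claim. -/

open Filter Asymptotics Topology Set

section ParametricIntegral

variable {α : Type*} [MeasurableSpace α] {μ : Measure α} {s : Set α} {g : α → ℝ}

theorem integrableOn_of_isBigO_nhds_prod {X F : Type*} [TopologicalSpace X]
    [NormedAddCommGroup F] {f : X → α → F} {x₀ : X} (hs : MeasurableSet s)
    (hg : IntegrableOn g s μ) (hf_meas : AEStronglyMeasurable (f x₀) (μ.restrict s))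
    (hf_bound : (fun p : X × α ↦ f p.1 p.2) =O[𝓝 x₀ ×ˢ 𝓟 s] fun p ↦ g p.2) :
    IntegrableOn (f x₀) s μ := by
  obtain ⟨C, hC⟩ := hf_bound.bound
  refine (hg.norm.const_mul C).mono' hf_meas ?_
  filter_upwards [ae_restrict_mem hs] with a ha
    using (eventually_prod_principal_iff.1 hC).self_of_nhds a ha

theorem hasFDerivAt_setIntegral_of_isBigO {E G : Type*} [NormedAddCommGroup E] [NormedSpace ℝ E]
    [NormedAddCommGroup G] [NormedSpace ℝ G] {f : E → α → G} {f' : E → α → E →L[ℝ] G} {x₀ : E}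
    (hs : MeasurableSet s) (hg : IntegrableOn g s μ)
    (hf_meas : ∀ᶠ x in 𝓝 x₀, AEStronglyMeasurable (f x) (μ.restrict s))
    (hf_int : IntegrableOn (f x₀) s μ)
    (hf'_meas : AEStronglyMeasurable (f' x₀) (μ.restrict s))
    (hf'_bound : (fun p : E × α ↦ f' p.1 p.2) =O[𝓝 x₀ ×ˢ 𝓟 s] fun p ↦ g p.2)
    (hff' : ∀ᶠ x in 𝓝 x₀, ∀ a ∈ s, HasFDerivAt (f · a) (f' x a) x) :
    HasFDerivAt (fun x ↦ ∫ a in s, f x a ∂μ) (∫ a in s, f' x₀ a ∂μ) x₀ := by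
  obtain ⟨C, hC⟩ := hf'_bound.bound
  refine hasFDerivAt_integral_of_dominated_of_fderiv_le (bound := fun a ↦ C * ‖g a‖)
    ((eventually_prod_principal_iff.1 hC).and hff') hf_meas hf_int hf'_meas ?_
    (hg.norm.const_mul C) ?_
  · filter_upwards [ae_restrict_mem hs] with a ha x hx using hx.1 a ha
  · filter_upwards [ae_restrict_mem hs] with a ha x hx using hx.2 a ha

variable {ι : Type*} [Fintype ι] [DecidableEq ι]

/-- The linear form `x ↦ ∑ i, x i * v i` on `ι → ℝ`, depending continuously and linearly on `v`.
It presents a Fréchet derivative by its vector `v` of partial derivatives. -/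
noncomputable def coordForm : (ι → ℝ) →L[ℝ] (ι → ℝ) →L[ℝ] ℝ :=
  (ContinuousLinearEquiv.piRing (𝕜 := ℝ) (E := ℝ) ι).symm

theorem coordForm_apply (v x : ι → ℝ) : coordForm v x = ∑ i, x i * v i :=
  LinearEquiv.piRing_symm_apply (S := ℝ) v x

theorem coordForm_single (v : ι → ℝ) (j : ι) : coordForm v (Pi.single j 1) = v j := by
  simp [coordForm_apply, Pi.single_apply]

theorem eq_coordForm {L : (ι → ℝ) →L[ℝ] ℝ} {v : ι → ℝ} (h : ∀ j, L (Pi.single j 1) = v j) :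
    L = coordForm v :=
  (ContinuousLinearEquiv.piRing (𝕜 := ℝ) (E := ℝ) ι).eq_symm_apply.2 (funext h)

theorem hasFDerivAt_setIntegral_coordForm_of_isBigO {f : (ι → ℝ) → α → ℝ}
    {D : ι → (ι → ℝ) → α → ℝ} {x₀ : ι → ℝ} (hs : MeasurableSet s)
    (hg : IntegrableOn g s μ) (hf_meas : ∀ᶠ x in 𝓝 x₀, AEStronglyMeasurable (f x) (μ.restrict s))
    (hf_int : IntegrableOn (f x₀) s μ)
    (hD_meas : ∀ j, AEStronglyMeasurable (D j x₀) (μ.restrict s))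
    (hD_bound : ∀ j, (fun p : (ι → ℝ) × α ↦ D j p.1 p.2) =O[𝓝 x₀ ×ˢ 𝓟 s] fun p ↦ g p.2)
    (hfD : ∀ᶠ x in 𝓝 x₀, ∀ a ∈ s, HasFDerivAt (f · a) (coordForm fun j ↦ D j x a) x) :
    HasFDerivAt (fun x ↦ ∫ a in s, f x a ∂μ) (coordForm fun j ↦ ∫ a in s, D j x₀ a ∂μ) x₀ := by
  have hD_pi : AEStronglyMeasurable (fun a j ↦ D j x₀ a) (μ.restrict s) :=
    (aemeasurable_pi_lambda _ fun j ↦ (hD_meas j).aemeasurable).aestronglyMeasurable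
  have hD_int (j : ι) : IntegrableOn (D j x₀) s μ :=
    integrableOn_of_isBigO_nhds_prod hs hg (hD_meas j) (hD_bound j)
  refine (hasFDerivAt_setIntegral_of_isBigO hs hg hf_meas hf_int
    (coordForm.continuous.comp_aestronglyMeasurable hD_pi)
    ((coordForm.isBigO_comp _ _).trans (isBigO_pi.2 hD_bound)) hfD).congr_fderiv ?_
  calc ∫ a in s, coordForm (fun j ↦ D j x₀ a) ∂μ
      = coordForm (∫ a in s, fun j ↦ D j x₀ a ∂μ) :=
        coordForm.integral_comp_comm (Integrable.of_eval hD_int)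
    _ = coordForm fun j ↦ ∫ a in s, D j x₀ a ∂μ :=
        congrArg coordForm (funext fun j ↦ eval_integral hD_int j)

end ParametricIntegral

theorem isBigO_add_one_pow_inv_of_le {X : Type*} (l : Filter X) {m n : ℕ} (h : m ≤ n) :
    (fun p : X × ℝ ↦ ((p.2 + 1) ^ n)⁻¹) =O[l ×ˢ 𝓟 (Ioi 0)]
      fun p ↦ ((p.2 + 1) ^ m)⁻¹ := by
  refine .of_bound' ?_
  filter_upwards [tendsto_snd.eventually (mem_principal_self _)] with p (_ : 0 < p.2)
  rw [norm_of_nonneg (by positivity), norm_of_nonneg (by positivity)]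
  exact inv_anti₀ (by positivity) (pow_le_pow_right₀ (by linarith) h)

theorem integrableOn_inv_add_one_sq : IntegrableOn (fun τ : ℝ ↦ ((τ + 1) ^ 2)⁻¹) (Ioi 0) := by
  refine (integrableOn_add_rpow_Ioi_of_lt (a := -2) (c := 0) (m := 1) (by norm_num)
    (by norm_num)).congr_fun (fun τ (hτ : 0 < τ) ↦ ?_) measurableSet_Ioi
  simp only
  rw [rpow_neg (by positivity), rpow_two]

theorem integral_Ioi_id_mul_deriv_eq_neg_integral {g g' : ℝ → ℝ}
    (hg_zero : ContinuousWithinAt g (Ioi 0) 0) (hgg' : ∀ τ ∈ Ioi 0, HasDerivAt g (g' τ) τ)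
    (hg_int : IntegrableOn g (Ioi 0)) (hg'_int : IntegrableOn (fun τ ↦ τ * g' τ) (Ioi 0))
    (hg_top : Tendsto (fun τ ↦ τ * g τ) atTop (𝓝 0)) :
    ∫ τ in Ioi 0, τ * g' τ = -∫ τ in Ioi 0, g τ := by
  have h_zero : Tendsto (id * g) (𝓝[>] 0) (𝓝 0) := by
    simpa using (continuousWithinAt_id.mul hg_zero).tendsto
  simpa using integral_Ioi_mul_deriv_eq_deriv_mul (u' := 1) (fun τ _ ↦ hasDerivAt_id τ) hgg'
    hg'_int (by simpa using hg_int) h_zero hg_top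

theorem id_mul_deriv_pow {𝕜 : Type*} [NontriviallyNormedField 𝕜] (n : ℕ) (x : 𝕜) :
    x * deriv (fun y : 𝕜 ↦ y ^ n) x = n * x ^ n := by
  rcases n with _ | n
  · simp
  · rw [deriv_pow_field, add_tsub_cancel_right, mul_left_comm, ← pow_succ']

theorem pow_eq_pow_mul_pow_succ {M : Type*} [Monoid M] {d : ℕ} (i : Fin d) (x : M) :
    x ^ d = x ^ (d - 1 - (i : ℕ)) * x ^ ((i : ℕ) + 1) := by
  rw [← pow_add]
  congr 1
  omega

section PositiveRegion

variable {d : ℕ} {e : Fin d → ℝ} {τ : ℝ}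

/-- The vectors `e` for which `q_e` has no root in `[0, ∞)`, i.e. is positive there. -/
def qePositive (d : ℕ) : Set (Fin d → ℝ) :=
  {e | ∀ τ : ℝ, 0 ≤ τ → 0 < qe d e τ}

theorem mem_qePositive_of_pos (he : ∀ i, 0 < e i) : e ∈ qePositive d := by
  intro τ hτ
  have hsum_nonneg : ∀ i ∈ Finset.univ, 0 ≤ e i * τ ^ (d - 1 - (i : ℕ)) := fun i _ ↦
    mul_nonneg (he i).le (pow_nonneg hτ _)
  rcases d with _ | n
  · simp [qe]
  · have hlast := Finset.single_le_sum hsum_nonneg (Finset.mem_univ (Fin.last n))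
    simp only [Fin.val_last, add_tsub_cancel_right, tsub_self, pow_zero, mul_one] at hlast
    exact add_pos_of_nonneg_of_pos (pow_nonneg hτ _) ((he _).trans_le hlast)

/-- The homogenization `x ^ d + ∑ i, e i * x ^ (d - 1 - i) * y ^ (i + 1)` of `q_e`, restricted to
the segment `x = 1 - s`, `y = s`. It trades the ray `τ ∈ [0, ∞)` for the compact interval
`s = 1 / (τ + 1) ∈ [0, 1]`. -/
noncomputable def qeSegment (d : ℕ) (e : Fin d → ℝ) (s : ℝ) : ℝ :=
  (1 - s) ^ d + ∑ i : Fin d, e i * ((1 - s) ^ (d - 1 - (i : ℕ)) * s ^ ((i : ℕ) + 1))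

theorem qe_eq_add_one_pow_mul_qeSegment (e : Fin d → ℝ) (hτ : τ + 1 ≠ 0) :
    qe d e τ = (τ + 1) ^ d * qeSegment d e (τ + 1)⁻¹ := by
  have hsub : 1 - (τ + 1)⁻¹ = τ / (τ + 1) := by field_simp; ring
  rw [qe, qeSegment, hsub, mul_add, Finset.mul_sum]
  congr 1
  · rw [← mul_pow, mul_div_cancel₀ _ hτ]
  · refine Finset.sum_congr rfl fun i _ ↦ ?_
    rw [pow_eq_pow_mul_pow_succ i (τ + 1), div_pow, inv_pow]
    field_simp

theorem continuous_qeSegment : Continuous fun p : (Fin d → ℝ) × ℝ ↦ qeSegment d p.1 p.2 := by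
  unfold qeSegment
  fun_prop

theorem qeSegment_pos (he : e ∈ qePositive d) {s : ℝ} (hs : s ∈ Icc 0 1) :
    0 < qeSegment d e s := by
  rcases hs.1.eq_or_lt with rfl | hs0
  · simp [qeSegment]
  · have hτ : 0 ≤ s⁻¹ - 1 := sub_nonneg.2 ((one_le_inv₀ hs0).2 hs.2)
    have hq := he _ hτ
    rw [qe_eq_add_one_pow_mul_qeSegment e (by simpa using hs0.ne'), sub_add_cancel, inv_inv] at hq
    exact pos_of_mul_pos_right hq (by positivity)

theorem exists_eventually_mul_add_one_pow_le_qe (he : e ∈ qePositive d) :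
    ∃ c > 0, ∀ᶠ e' in 𝓝 e, ∀ τ : ℝ, 0 ≤ τ → c * (τ + 1) ^ d ≤ qe d e' τ := by
  obtain ⟨s₀, hs₀, hmin⟩ := isCompact_Icc.exists_isMinOn (nonempty_Icc.2 (zero_le_one' ℝ))
    (continuous_qeSegment.comp (Continuous.prodMk_right e)).continuousOn
  have hpos : 0 < qeSegment d e s₀ := qeSegment_pos he hs₀
  have hnear : ∀ᶠ e' in 𝓝 e, ∀ s ∈ Icc (0 : ℝ) 1, qeSegment d e s₀ / 2 ≤ qeSegment d e' s :=
    isCompact_Icc.eventually_forall_of_forall_eventually fun s hs ↦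
      continuous_qeSegment.continuousAt.eventually_const_le
        ((half_lt_self hpos).trans_le (hmin hs))
  refine ⟨_, half_pos hpos, hnear.mono fun e' he' τ hτ ↦ ?_⟩
  have hs : (τ + 1)⁻¹ ∈ Icc (0 : ℝ) 1 := ⟨by positivity, inv_le_one_of_one_le₀ (by linarith)⟩
  rw [qe_eq_add_one_pow_mul_qeSegment e' (by positivity), mul_comm]
  exact mul_le_mul_of_nonneg_left (he' _ hs) (by positivity)

theorem isOpen_qePositive : IsOpen (qePositive d) := by
  refine isOpen_iff_eventually.2 fun e he ↦ ?_
  obtain ⟨c, hc, hlower⟩ := exists_eventually_mul_add_one_pow_le_qe he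
  filter_upwards [hlower] with e' he' τ hτ
  exact (by positivity : 0 < c * (τ + 1) ^ d).trans_le (he' τ hτ)

end PositiveRegion

section LogPartial

variable {d : ℕ}

/-- The logarithmic partial derivative `∂ log q_e(τ) / ∂e_{i+1}`, where the coordinate `i : Fin d`
stores `e_{i+1}`. -/
noncomputable def logPartial (d : ℕ) (i : Fin d) (e : Fin d → ℝ) (τ : ℝ) : ℝ :=
  τ ^ (d - 1 - (i : ℕ)) / qe d e τ

/-- The part of `logPartial d i e τ` which is not integrable at `τ = ∞`; it is present only for
`i = 0`, that is, for `e₁`. -/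
noncomputable def logPartialTail (i : Fin d) (τ : ℝ) : ℝ :=
  if (i : ℕ) = 0 then 1 / (τ + 1) else 0

/-- The logarithmic partial derivative with its non-integrable tail removed. -/
noncomputable def logPartialReg (d : ℕ) (i : Fin d) (e : Fin d → ℝ) (τ : ℝ) : ℝ :=
  logPartial d i e τ - logPartialTail i τ

/-- The weighted Euler operator `∑ w_i e_i ∂/∂e_i` applied to `log q_e(τ)`. -/
noncomputable def eulerLog (d : ℕ) (w e : Fin d → ℝ) (τ : ℝ) : ℝ :=
  ∑ i, e i * (w i * logPartial d i e τ)

/-- The regularized weighted Euler operator applied to `log q_e(τ)`. The integrands of `G` and `F`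
are the cases `w = 1` and `w = degreeWeight d`. -/
noncomputable def eulerLogReg (d : ℕ) (w e : Fin d → ℝ) (τ : ℝ) : ℝ :=
  ∑ i, e i * (w i * logPartialReg d i e τ)

/-- The first partial derivative of `eulerLogReg` in the `j`-th coordinate. -/
noncomputable def eulerLogRegPartial (d : ℕ) (w : Fin d → ℝ) (j : Fin d) (e : Fin d → ℝ)
    (τ : ℝ) : ℝ :=
  w j * logPartialReg d j e τ - eulerLog d w e τ * logPartial d j e τ

/-- The second partial derivative of `eulerLogReg` in the coordinates `j` and `m`. -/
noncomputable def eulerLogRegPartial₂ (d : ℕ) (w : Fin d → ℝ) (j m : Fin d) (e : Fin d → ℝ)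
    (τ : ℝ) : ℝ :=
  (2 * eulerLog d w e τ - w j - w m) * (logPartial d j e τ * logPartial d m e τ)

/-- The weight `k` of `e_k`, for which `q_e(τ)` is homogeneous of degree `d` when `τ` has
weight `1`. -/
def degreeWeight (d : ℕ) (i : Fin d) : ℝ :=
  (i : ℕ) + 1

theorem eulerLog_one {e : Fin d → ℝ} {τ : ℝ} (hq : qe d e τ ≠ 0) :
    eulerLog d 1 e τ = 1 - τ ^ d / qe d e τ := by
  have hlower : ∑ i : Fin d, e i * τ ^ (d - 1 - (i : ℕ)) = qe d e τ - τ ^ d := by simp [qe]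
  simp only [eulerLog, logPartial, Pi.one_apply, one_mul, mul_div_assoc', ← Finset.sum_div, hlower]
  rw [sub_div, div_self hq]

/- Both factors on the right are `O((τ + 1)⁻¹)`: subtracting `e₁ / (τ + 1)` improves the decay of
the integrands by one power. -/
theorem logPartialReg_eq_of_val_eq_zero {e : Fin d → ℝ} {τ : ℝ} (hq : qe d e τ ≠ 0)
    (hτ : τ + 1 ≠ 0) {i : Fin d} (hi : (i : ℕ) = 0) :
    logPartialReg d i e τ = (logPartial d i e τ - eulerLog d 1 e τ) * (τ + 1)⁻¹ := by
  rw [eulerLog_one hq, logPartialReg, logPartialTail, if_pos hi, logPartial, hi,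
    pow_eq_pow_mul_pow_succ i τ, hi]
  field_simp
  ring

theorem sum_mul_logPartialTail [NeZero d] (c : Fin d → ℝ) (τ : ℝ) :
    ∑ i : Fin d, c i * logPartialTail i τ = c 0 / (τ + 1) := by
  simp [logPartialTail, Fin.val_eq_zero_iff, div_eq_mul_inv]

theorem eulerLogReg_eq_sub_coordForm (w e : Fin d → ℝ) (τ : ℝ) :
    eulerLogReg d w e τ =
      eulerLog d w e τ - coordForm (fun i ↦ w i * logPartialTail i τ) e := by
  simp only [eulerLogReg, eulerLog, logPartialReg, coordForm_apply, mul_sub,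
    Finset.sum_sub_distrib]

theorem eulerLogReg_eq [NeZero d] {w : Fin d → ℝ} (hw : w 0 = 1) (e : Fin d → ℝ) (τ : ℝ) :
    eulerLogReg d w e τ = eulerLog d w e τ - e 0 / (τ + 1) := by
  rw [eulerLogReg_eq_sub_coordForm, coordForm_apply]
  simp_rw [← mul_assoc]
  rw [sum_mul_logPartialTail, hw, mul_one]

theorem differentiable_qe (d : ℕ) (e : Fin d → ℝ) : Differentiable ℝ (qe d e) := by
  unfold qe
  fun_prop

section Measurability

theorem measurable_logPartial (i : Fin d) (e : Fin d → ℝ) : Measurable (logPartial d i e) :=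
  (measurable_id.pow_const _).div (differentiable_qe d e).continuous.measurable

theorem measurable_logPartialReg (i : Fin d) (e : Fin d → ℝ) :
    Measurable (logPartialReg d i e) := by
  refine (measurable_logPartial i e).sub ?_
  unfold logPartialTail
  split_ifs <;> fun_prop

theorem measurable_eulerLog (w e : Fin d → ℝ) : Measurable (eulerLog d w e) :=
  Finset.measurable_fun_sum _ fun i _ ↦ ((measurable_logPartial i e).const_mul _).const_mul _

theorem measurable_eulerLogReg (w e : Fin d → ℝ) : Measurable (eulerLogReg d w e) :=
  Finset.measurable_fun_sum _ fun i _ ↦ ((measurable_logPartialReg i e).const_mul _).const_mul _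

theorem measurable_eulerLogRegPartial (w : Fin d → ℝ) (j : Fin d) (e : Fin d → ℝ) :
    Measurable (eulerLogRegPartial d w j e) :=
  ((measurable_logPartialReg j e).const_mul _).sub
    ((measurable_eulerLog w e).mul (measurable_logPartial j e))

theorem measurable_eulerLogRegPartial₂ (w : Fin d → ℝ) (j m : Fin d) (e : Fin d → ℝ) :
    Measurable (eulerLogRegPartial₂ d w j m e) :=
  ((((measurable_eulerLog w e).const_mul _).sub_const _).sub_const _).mul
    ((measurable_logPartial j e).mul (measurable_logPartial m e))

end Measurability

section CoefficientDerivatives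

theorem hasFDerivAt_qe (e : Fin d → ℝ) (τ : ℝ) :
    HasFDerivAt (qe d · τ) (coordForm fun j ↦ τ ^ (d - 1 - (j : ℕ))) e := by
  have hqe : (qe d · τ) = fun e ↦ τ ^ d + coordForm (fun j : Fin d ↦ τ ^ (d - 1 - (j : ℕ))) e := by
    simp only [qe, coordForm_apply]
  exact hqe ▸ (coordForm _).hasFDerivAt.const_add _

variable {e : Fin d → ℝ} {τ : ℝ} (hq : qe d e τ ≠ 0)
include hq

theorem hasFDerivAt_logPartial (i : Fin d) :
    HasFDerivAt (logPartial d i · τ)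
      (coordForm fun j ↦ -(logPartial d i e τ * logPartial d j e τ)) e := by
  have hinv := (hasDerivAt_inv hq).comp_hasFDerivAt e (hasFDerivAt_qe e τ)
  refine (hinv.const_mul (τ ^ (d - 1 - (i : ℕ)))).congr_fderiv (eq_coordForm fun j ↦ ?_)
  simp only [_root_.smul_apply, coordForm_single, smul_eq_mul, logPartial]
  ring

theorem hasFDerivAt_eulerLog (w : Fin d → ℝ) :
    HasFDerivAt (eulerLog d w · τ)
      (coordForm fun j ↦ w j * logPartial d j e τ - eulerLog d w e τ * logPartial d j e τ) e := by
  have hsum := HasFDerivAt.fun_sum (u := Finset.univ) fun i _ ↦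
    (hasFDerivAt_apply (𝕜 := ℝ) i e).mul ((hasFDerivAt_logPartial hq i).const_mul (w i))
  refine hsum.congr_fderiv (eq_coordForm fun j ↦ ?_)
  simp [coordForm_single, Pi.single_apply, eulerLog, Finset.sum_add_distrib, Finset.sum_mul,
    mul_assoc, sub_eq_neg_add]

theorem hasFDerivAt_eulerLogReg (w : Fin d → ℝ) :
    HasFDerivAt (eulerLogReg d w · τ) (coordForm fun j ↦ eulerLogRegPartial d w j e τ) e := by
  simp_rw [eulerLogReg_eq_sub_coordForm]
  refine ((hasFDerivAt_eulerLog hq w).sub (coordForm _).hasFDerivAt).congr_fderiv ?_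
  rw [← map_sub]
  congr 1 with j
  simp only [Pi.sub_apply, eulerLogRegPartial, logPartialReg]
  ring

theorem hasFDerivAt_eulerLogRegPartial (w : Fin d → ℝ) (j : Fin d) :
    HasFDerivAt (eulerLogRegPartial d w j · τ)
      (coordForm fun m ↦ eulerLogRegPartial₂ d w j m e τ) e := by
  have hj := hasFDerivAt_logPartial hq j
  refine (((hj.sub_const (logPartialTail j τ)).const_mul (w j)).sub
    ((hasFDerivAt_eulerLog hq w).mul hj)).congr_fderiv (eq_coordForm fun m ↦ ?_)
  simp only [_root_.sub_apply, _root_.add_apply, _root_.smul_apply, coordForm_single, smul_eq_mul,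
    eulerLogRegPartial₂]
  ring

end CoefficientDerivatives

section Decay

variable {e : Fin d → ℝ}

theorem isBigO_coord (i : Fin d) :
    (fun p : (Fin d → ℝ) × ℝ ↦ p.1 i) =O[𝓝 e ×ˢ 𝓟 (Ioi 0)] fun _ ↦ (1 : ℝ) :=
  ((continuous_apply i).continuousAt.tendsto.comp tendsto_fst).isBigO_one ℝ

variable (he : e ∈ qePositive d)
include he

theorem isBigO_logPartial (i : Fin d) :
    (fun p : (Fin d → ℝ) × ℝ ↦ logPartial d i p.1 p.2) =O[𝓝 e ×ˢ 𝓟 (Ioi 0)]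
      fun p ↦ ((p.2 + 1) ^ ((i : ℕ) + 1))⁻¹ := by
  obtain ⟨c, hc, hlower⟩ := exists_eventually_mul_add_one_pow_le_qe he
  refine .of_bound c⁻¹ (eventually_prod_principal_iff.2 (hlower.mono fun e' he' τ hτ ↦ ?_))
  have hτ : 0 < τ := hτ
  have hq : c * (τ + 1) ^ d ≤ qe d e' τ := he' τ hτ.le
  have hq_pos : 0 < qe d e' τ := (by positivity : 0 < c * (τ + 1) ^ d).trans_le hq
  rw [logPartial, norm_of_nonneg (by positivity), norm_of_nonneg (by positivity)]
  calc τ ^ (d - 1 - (i : ℕ)) / qe d e' τ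
      ≤ (τ + 1) ^ (d - 1 - (i : ℕ)) / (c * (τ + 1) ^ d) := by gcongr; linarith
    _ = c⁻¹ * ((τ + 1) ^ ((i : ℕ) + 1))⁻¹ := by
      rw [pow_eq_pow_mul_pow_succ i (τ + 1)]; field_simp

theorem isBigO_logPartial_one (i : Fin d) :
    (fun p : (Fin d → ℝ) × ℝ ↦ logPartial d i p.1 p.2) =O[𝓝 e ×ˢ 𝓟 (Ioi 0)]
      fun p ↦ (p.2 + 1)⁻¹ := by
  simpa using (isBigO_logPartial he i).trans (isBigO_add_one_pow_inv_of_le _ (m := 1) (by omega))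

theorem isBigO_eulerLog (w : Fin d → ℝ) :
    (fun p : (Fin d → ℝ) × ℝ ↦ eulerLog d w p.1 p.2) =O[𝓝 e ×ˢ 𝓟 (Ioi 0)]
      fun p ↦ (p.2 + 1)⁻¹ := by
  refine .fun_sum fun i _ ↦ ?_
  simpa using (isBigO_coord i).mul ((isBigO_logPartial_one he i).const_mul_left (w i))

theorem isBigO_logPartial_mul_logPartial (j m : Fin d) :
    (fun p : (Fin d → ℝ) × ℝ ↦ logPartial d j p.1 p.2 * logPartial d m p.1 p.2)
      =O[𝓝 e ×ˢ 𝓟 (Ioi 0)] fun p ↦ ((p.2 + 1) ^ 2)⁻¹ := by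
  simpa [sq] using (isBigO_logPartial_one he j).mul (isBigO_logPartial_one he m)

theorem tendsto_id_mul_logPartial_mul_logPartial (j m : Fin d) :
    Tendsto (fun τ ↦ τ * (logPartial d j e τ * logPartial d m e τ)) atTop (𝓝 0) := by
  have hpath : Tendsto (fun τ : ℝ ↦ (e, τ)) atTop (𝓝 e ×ˢ 𝓟 (Ioi 0)) :=
    tendsto_const_nhds.prodMk (tendsto_principal.2 (eventually_gt_atTop 0))
  refine ((isBigO_refl id atTop).mul
    ((isBigO_logPartial_mul_logPartial he j m).comp_tendsto hpath)).trans_tendsto ?_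
  refine squeeze_zero' ?_ ?_ tendsto_inv_atTop_zero
  all_goals filter_upwards [eventually_gt_atTop 0] with τ hτ
  · simp only [Function.comp_apply, id_eq]
    positivity
  · calc τ * ((τ + 1) ^ 2)⁻¹ ≤ τ * (τ ^ 2)⁻¹ := by gcongr; linarith
      _ = τ⁻¹ := by field_simp

theorem isBigO_logPartialReg (i : Fin d) :
    (fun p : (Fin d → ℝ) × ℝ ↦ logPartialReg d i p.1 p.2) =O[𝓝 e ×ˢ 𝓟 (Ioi 0)]
      fun p ↦ ((p.2 + 1) ^ 2)⁻¹ := by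
  by_cases hi : (i : ℕ) = 0
  · have hprod := ((isBigO_logPartial_one he i).sub (isBigO_eulerLog he 1)).mul
      (isBigO_refl (fun p : (Fin d → ℝ) × ℝ ↦ (p.2 + 1)⁻¹) _)
    refine hprod.congr' (eventually_prod_principal_iff.2 ?_) (.of_forall fun p ↦ ?_)
    · filter_upwards [isOpen_qePositive.mem_nhds he] with e' he' τ hτ
      have hτ : 0 < τ := hτ
      exact (logPartialReg_eq_of_val_eq_zero (he' τ hτ.le).ne' (by positivity) hi).symm
    · simp only [sq, mul_inv]
  · simpa only [logPartialReg, logPartialTail, if_neg hi, sub_zero] using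
      (isBigO_logPartial he i).trans (isBigO_add_one_pow_inv_of_le _ (by omega))

theorem isBigO_eulerLogReg (w : Fin d → ℝ) :
    (fun p : (Fin d → ℝ) × ℝ ↦ eulerLogReg d w p.1 p.2) =O[𝓝 e ×ˢ 𝓟 (Ioi 0)]
      fun p ↦ ((p.2 + 1) ^ 2)⁻¹ := by
  refine .fun_sum fun i _ ↦ ?_
  simpa using (isBigO_coord i).mul ((isBigO_logPartialReg he i).const_mul_left (w i))

theorem isBigO_eulerLogRegPartial (w : Fin d → ℝ) (j : Fin d) :
    (fun p : (Fin d → ℝ) × ℝ ↦ eulerLogRegPartial d w j p.1 p.2) =O[𝓝 e ×ˢ 𝓟 (Ioi 0)]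
      fun p ↦ ((p.2 + 1) ^ 2)⁻¹ := by
  refine ((isBigO_logPartialReg he j).const_mul_left (w j)).sub ?_
  simpa [sq] using (isBigO_eulerLog he w).mul (isBigO_logPartial_one he j)

theorem isBigO_eulerLogRegPartial₂ (w : Fin d → ℝ) (j m : Fin d) :
    (fun p : (Fin d → ℝ) × ℝ ↦ eulerLogRegPartial₂ d w j m p.1 p.2) =O[𝓝 e ×ˢ 𝓟 (Ioi 0)]
      fun p ↦ ((p.2 + 1) ^ 2)⁻¹ := by
  have heuler : (fun p : (Fin d → ℝ) × ℝ ↦ eulerLog d w p.1 p.2) =O[𝓝 e ×ˢ 𝓟 (Ioi 0)]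
      fun _ ↦ (1 : ℝ) := by
    simpa only [pow_one, pow_zero, inv_one] using (isBigO_eulerLog he w).trans
      (by simpa only [pow_zero, inv_one, pow_one] using
        isBigO_add_one_pow_inv_of_le (𝓝 e) (n := 1) zero_le_one)
  have hconst (c : ℝ) : (fun _ : (Fin d → ℝ) × ℝ ↦ c) =O[𝓝 e ×ˢ 𝓟 (Ioi 0)] fun _ ↦ (1 : ℝ) :=
    isBigO_const_const c one_ne_zero _
  simpa only [eulerLogRegPartial₂, one_mul] using
    (((heuler.const_mul_left 2).sub (hconst (w j))).sub (hconst (w m))).mul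
      (isBigO_logPartial_mul_logPartial he j m)

end Decay

section IntegralDerivatives

variable {e : Fin d → ℝ} (he : e ∈ qePositive d)
include he

theorem hasFDerivAt_integral_eulerLogReg (w : Fin d → ℝ) :
    HasFDerivAt (fun e ↦ ∫ τ in Ioi 0, eulerLogReg d w e τ)
      (coordForm fun j ↦ ∫ τ in Ioi 0, eulerLogRegPartial d w j e τ) e :=
  hasFDerivAt_setIntegral_coordForm_of_isBigO measurableSet_Ioi integrableOn_inv_add_one_sq
    (.of_forall fun _ ↦ (measurable_eulerLogReg w _).aestronglyMeasurable)
    (integrableOn_of_isBigO_nhds_prod measurableSet_Ioi integrableOn_inv_add_one_sq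
      (measurable_eulerLogReg w e).aestronglyMeasurable (isBigO_eulerLogReg he w))
    (fun j ↦ (measurable_eulerLogRegPartial w j e).aestronglyMeasurable)
    (isBigO_eulerLogRegPartial he w)
    ((isOpen_qePositive.eventually_mem he).mono fun _ he' τ hτ ↦
      hasFDerivAt_eulerLogReg (he' τ (le_of_lt hτ)).ne' w)

theorem hasFDerivAt_integral_eulerLogRegPartial (w : Fin d → ℝ) (j : Fin d) :
    HasFDerivAt (fun e ↦ ∫ τ in Ioi 0, eulerLogRegPartial d w j e τ)
      (coordForm fun m ↦ ∫ τ in Ioi 0, eulerLogRegPartial₂ d w j m e τ) e :=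
  hasFDerivAt_setIntegral_coordForm_of_isBigO measurableSet_Ioi integrableOn_inv_add_one_sq
    (.of_forall fun _ ↦ (measurable_eulerLogRegPartial w j _).aestronglyMeasurable)
    (integrableOn_of_isBigO_nhds_prod measurableSet_Ioi integrableOn_inv_add_one_sq
      (measurable_eulerLogRegPartial w j e).aestronglyMeasurable (isBigO_eulerLogRegPartial he w j))
    (fun m ↦ (measurable_eulerLogRegPartial₂ w j m e).aestronglyMeasurable)
    (isBigO_eulerLogRegPartial₂ he w j)
    ((isOpen_qePositive.eventually_mem he).mono fun _ he' τ hτ ↦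
      hasFDerivAt_eulerLogRegPartial (he' τ (le_of_lt hτ)).ne' w j)

end IntegralDerivatives

section RayDerivatives

theorem natCast_eq_sub_degreeWeight (i : Fin d) :
    ((d - 1 - (i : ℕ) : ℕ) : ℝ) = d - degreeWeight d i := by
  rw [degreeWeight, Nat.sub_sub, Nat.cast_sub (by omega)]
  push_cast
  ring

variable {e : Fin d → ℝ} {τ : ℝ} (hq : qe d e τ ≠ 0)
include hq

theorem id_mul_deriv_qe :
    τ * deriv (qe d e) τ = (d - eulerLog d (degreeWeight d) e τ) * qe d e τ := by
  have hderiv : deriv (qe d e) τ = deriv (fun t ↦ t ^ d) τ +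
      ∑ i, e i * deriv (fun t ↦ t ^ (d - 1 - (i : ℕ))) τ := by
    unfold qe
    rw [deriv_fun_add (by fun_prop) (by fun_prop), deriv_fun_sum (by fun_prop)]
    simp only [deriv_const_mul_field]
  have heuler : eulerLog d (degreeWeight d) e τ * qe d e τ =
      ∑ i, degreeWeight d i * (e i * τ ^ (d - 1 - (i : ℕ))) := by
    rw [eulerLog, Finset.sum_mul]
    refine Finset.sum_congr rfl fun i _ ↦ ?_
    rw [logPartial]
    field_simp
  rw [hderiv, sub_mul, heuler, mul_add, id_mul_deriv_pow, Finset.mul_sum, qe, mul_add,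
    Finset.mul_sum, add_sub_assoc, ← Finset.sum_sub_distrib]
  congr 1
  refine Finset.sum_congr rfl fun i _ ↦ ?_
  rw [mul_left_comm, id_mul_deriv_pow, natCast_eq_sub_degreeWeight]
  ring

theorem differentiableAt_logPartial (i : Fin d) : DifferentiableAt ℝ (logPartial d i e) τ :=
  (differentiableAt_pow _).div (differentiable_qe d e τ) hq

theorem id_mul_deriv_logPartial (i : Fin d) :
    τ * deriv (logPartial d i e) τ =
      (eulerLog d (degreeWeight d) e τ - degreeWeight d i) * logPartial d i e τ := by
  have hderiv : deriv (logPartial d i e) τ =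
      (deriv (fun t ↦ t ^ (d - 1 - (i : ℕ))) τ * qe d e τ
        - τ ^ (d - 1 - (i : ℕ)) * deriv (qe d e) τ) / qe d e τ ^ 2 :=
    deriv_fun_div (differentiableAt_pow _) (differentiable_qe d e τ) hq
  rw [hderiv, mul_div_assoc', mul_sub, ← mul_assoc, id_mul_deriv_pow, mul_left_comm,
    id_mul_deriv_qe hq, natCast_eq_sub_degreeWeight, logPartial]
  field_simp
  ring

theorem id_mul_deriv_logPartial_mul_logPartial (j m : Fin d) :
    τ * deriv (logPartial d j e * logPartial d m e) τ =
      eulerLogRegPartial₂ d (degreeWeight d) j m e τ := by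
  rw [deriv_mul (differentiableAt_logPartial hq j) (differentiableAt_logPartial hq m), mul_add,
    ← mul_assoc, id_mul_deriv_logPartial hq, mul_left_comm, id_mul_deriv_logPartial hq,
    eulerLogRegPartial₂]
  ring

end RayDerivatives

theorem integral_eulerLogRegPartial₂_degreeWeight {e : Fin d → ℝ} (he : e ∈ qePositive d)
    (j m : Fin d) :
    ∫ τ in Ioi 0, eulerLogRegPartial₂ d (degreeWeight d) j m e τ =
      -∫ τ in Ioi 0, logPartial d j e τ * logPartial d m e τ := by
  have hdiff (τ : ℝ) (hτ : 0 ≤ τ) :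
      DifferentiableAt ℝ (logPartial d j e * logPartial d m e) τ :=
    (differentiableAt_logPartial (he τ hτ).ne' j).mul
      (differentiableAt_logPartial (he τ hτ).ne' m)
  have heq : EqOn (fun τ ↦ τ * deriv (logPartial d j e * logPartial d m e) τ)
      (eulerLogRegPartial₂ d (degreeWeight d) j m e) (Ioi 0) := fun τ hτ ↦
    id_mul_deriv_logPartial_mul_logPartial (he τ (le_of_lt hτ)).ne' j m
  have hint : IntegrableOn (eulerLogRegPartial₂ d (degreeWeight d) j m e) (Ioi 0) :=
    integrableOn_of_isBigO_nhds_prod measurableSet_Ioi integrableOn_inv_add_one_sq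
      (measurable_eulerLogRegPartial₂ _ j m e).aestronglyMeasurable
      (isBigO_eulerLogRegPartial₂ he _ j m)
  rw [← setIntegral_congr_fun measurableSet_Ioi heq]
  exact integral_Ioi_id_mul_deriv_eq_neg_integral
    (hdiff 0 le_rfl).continuousAt.continuousWithinAt
    (fun τ hτ ↦ (hdiff τ (le_of_lt hτ)).hasDerivAt)
    (integrableOn_of_isBigO_nhds_prod measurableSet_Ioi integrableOn_inv_add_one_sq
      (f := fun e τ ↦ logPartial d j e τ * logPartial d m e τ)
      ((measurable_logPartial j e).mul (measurable_logPartial m e)).aestronglyMeasurable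
      (isBigO_logPartial_mul_logPartial he j m))
    (hint.congr_fun heq.symm measurableSet_Ioi)
    (tendsto_id_mul_logPartial_mul_logPartial he j m)

end LogPartial

section PartialDerivatives

variable {d : ℕ} {e : Fin d → ℝ}

theorem subQ_eq_integral_eulerLogReg (hd : 2 ≤ d) (he : e ∈ qePositive d) :
    subQ d hd e = ∫ τ in Ioi 0, eulerLogReg d 1 e τ := by
  have : NeZero d := ⟨by omega⟩
  refine setIntegral_congr_fun measurableSet_Ioi fun τ hτ ↦ ?_
  simp only [eulerLogReg_eq (w := 1) rfl, eulerLog_one (he τ (le_of_lt hτ)).ne', Fin.mk_zero']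

theorem entF_eq_integral_eulerLogReg (hd : 2 ≤ d) (he : e ∈ qePositive d) :
    entF d hd e = ∫ τ in Ioi 0, eulerLogReg d (degreeWeight d) e τ := by
  have : NeZero d := ⟨by omega⟩
  refine setIntegral_congr_fun measurableSet_Ioi fun τ hτ ↦ ?_
  have hq : qe d e τ ≠ 0 := (he τ (le_of_lt hτ)).ne'
  simp only [eulerLogReg_eq (w := degreeWeight d) (by simp [degreeWeight]), id_mul_deriv_qe hq,
    mul_div_cancel_right₀ _ hq, sub_sub_cancel, Fin.mk_zero']

theorem hasFDerivAt_subQ (hd : 2 ≤ d) (he : e ∈ qePositive d) :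
    HasFDerivAt (subQ d hd) (coordForm fun j ↦ ∫ τ in Ioi 0, eulerLogRegPartial d 1 j e τ) e :=
  (hasFDerivAt_integral_eulerLogReg he 1).congr_of_eventuallyEq <|
    (isOpen_qePositive.eventually_mem he).mono fun _ ↦ subQ_eq_integral_eulerLogReg hd

theorem hasFDerivAt_entF (hd : 2 ≤ d) (he : e ∈ qePositive d) :
    HasFDerivAt (entF d hd)
      (coordForm fun j ↦ ∫ τ in Ioi 0, eulerLogRegPartial d (degreeWeight d) j e τ) e :=
  (hasFDerivAt_integral_eulerLogReg he _).congr_of_eventuallyEq <|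
    (isOpen_qePositive.eventually_mem he).mono fun _ ↦ entF_eq_integral_eulerLogReg hd

theorem hasFDerivAt_fderiv_entF_single (hd : 2 ≤ d) (he : e ∈ qePositive d) (j : Fin d) :
    HasFDerivAt (fun e' ↦ fderiv ℝ (entF d hd) e' (Pi.single j 1))
      (coordForm fun m ↦ ∫ τ in Ioi 0, eulerLogRegPartial₂ d (degreeWeight d) j m e τ) e :=
  (hasFDerivAt_integral_eulerLogRegPartial he _ j).congr_of_eventuallyEq <|
    (isOpen_qePositive.eventually_mem he).mono fun _ he' ↦ by
      simp only [(hasFDerivAt_entF hd he').fderiv, coordForm_single]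

theorem eulerLogRegPartial_one_of_val_ne_zero {k : Fin d} (hk : (k : ℕ) ≠ 0) {τ : ℝ}
    (hq : qe d e τ ≠ 0) :
    eulerLogRegPartial d 1 k e τ = τ ^ (2 * d - ((k : ℕ) + 1)) / qe d e τ ^ 2 := by
  have hpow : 2 * d - ((k : ℕ) + 1) = d + (d - 1 - k) := by omega
  rw [eulerLogRegPartial, eulerLog_one hq, logPartialReg, logPartialTail, if_neg hk, logPartial,
    hpow, pow_add, Pi.one_apply]
  ring

theorem logPartial_mul_logPartial (j m : Fin d) (τ : ℝ) :
    logPartial d j e τ * logPartial d m e τ =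
      τ ^ (2 * d - (((j : ℕ) + 1) + ((m : ℕ) + 1))) / qe d e τ ^ 2 := by
  rw [logPartial, logPartial, div_mul_div_comm, ← pow_add, ← sq]
  congr 2
  omega

theorem fderiv_subQ_single (hd : 2 ≤ d) (he : e ∈ qePositive d) {k : Fin d} (hk : (k : ℕ) ≠ 0) :
    fderiv ℝ (subQ d hd) e (Pi.single k 1) =
      ∫ τ in Ioi 0, τ ^ (2 * d - ((k : ℕ) + 1)) / qe d e τ ^ 2 := by
  rw [(hasFDerivAt_subQ hd he).fderiv, coordForm_single]
  exact setIntegral_congr_fun measurableSet_Ioi fun τ hτ ↦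
    eulerLogRegPartial_one_of_val_ne_zero hk (he τ (le_of_lt hτ)).ne'

theorem fderiv_fderiv_entF_single (hd : 2 ≤ d) (he : e ∈ qePositive d) (j m : Fin d) :
    fderiv ℝ (fun e' ↦ fderiv ℝ (entF d hd) e' (Pi.single j 1)) e (Pi.single m 1) =
      -∫ τ in Ioi 0, τ ^ (2 * d - (((j : ℕ) + 1) + ((m : ℕ) + 1))) / qe d e τ ^ 2 := by
  simp only [(hasFDerivAt_fderiv_entF_single hd he j).fderiv, coordForm_single,
    integral_eulerLogRegPartial₂_degreeWeight he, logPartial_mul_logPartial]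

end PartialDerivatives

theorem subentropy_entropy_derivative_relation_general (d : ℕ) (hd : 2 ≤ d) (e : Fin d → ℝ)
    (he : e ∈ qePositive d) (j m k : Fin d) (hk : (k : ℕ) + 1 = ((j : ℕ) + 1) + ((m : ℕ) + 1)) :
    fderiv ℝ (subQ d hd) e (Pi.single k 1) =
        ∫ τ in Ioi 0, τ ^ (2 * d - (((j : ℕ) + 1) + ((m : ℕ) + 1))) / qe d e τ ^ 2 ∧
    fderiv ℝ (fun e' ↦ fderiv ℝ (entF d hd) e' (Pi.single j 1)) e (Pi.single m 1) =
        -∫ τ in Ioi 0, τ ^ (2 * d - (((j : ℕ) + 1) + ((m : ℕ) + 1))) / qe d e τ ^ 2 ∧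
    -fderiv ℝ (subQ d hd) e (Pi.single k 1) =
      fderiv ℝ (fun e' ↦ fderiv ℝ (entF d hd) e' (Pi.single j 1)) e (Pi.single m 1) := by
  have hG := hk ▸ fderiv_subQ_single hd he (k := k) (by omega)
  have hF := fderiv_fderiv_entF_single hd he j m
  exact ⟨hG, hF, by rw [hG, hF]⟩

/-- **`−∂Q/∂e_k = ∂²H/∂e_l∂e_m` for `k = l + m`.**
For positive `e₁, …, e_d` and `l, m ≥ 1` with `l + m ≤ d`:
(i) `∂G/∂e_{l+m} = ∫₀^∞ τ^{2d−l−m}/q_e(τ)² dτ`;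
(ii) `∂²F/∂e_l∂e_m = −∫₀^∞ τ^{2d−l−m}/q_e(τ)² dτ`;
hence `−∂G/∂e_{l+m} = ∂²F/∂e_l∂e_m`. -/
theorem subentropy_entropy_derivative_relation (d : ℕ) (hd : 2 ≤ d)
    (e : Fin d → ℝ) (he : ∀ i, 0 < e i)
    (l m : ℕ) (hl : 1 ≤ l) (hm : 1 ≤ m) (hlm : l + m ≤ d) :
    (fderiv ℝ (subQ d hd) e) (Pi.single (⟨l + m - 1, by omega⟩ : Fin d) 1) =
        ∫ τ in Set.Ioi (0 : ℝ), τ ^ (2 * d - (l + m)) / (qe d e τ) ^ 2 ∧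
    (fderiv ℝ (fun e' => (fderiv ℝ (entF d hd) e')
          (Pi.single (⟨l - 1, by omega⟩ : Fin d) 1)) e)
        (Pi.single (⟨m - 1, by omega⟩ : Fin d) 1) =
        -∫ τ in Set.Ioi (0 : ℝ), τ ^ (2 * d - (l + m)) / (qe d e τ) ^ 2 ∧
    -((fderiv ℝ (subQ d hd) e) (Pi.single (⟨l + m - 1, by omega⟩ : Fin d) 1)) =
      (fderiv ℝ (fun e' => (fderiv ℝ (entF d hd) e')
          (Pi.single (⟨l - 1, by omega⟩ : Fin d) 1)) e)
        (Pi.single (⟨m - 1, by omega⟩ : Fin d) 1) := by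
  simpa only [Nat.sub_add_cancel hl, Nat.sub_add_cancel hm] using
    subentropy_entropy_derivative_relation_general d hd e (mem_qePositive_of_pos he)
      ⟨l - 1, by omega⟩ ⟨m - 1, by omega⟩ ⟨l + m - 1, by omega⟩ (by simp only; omega)
end

section
/- Let d ≥ 2 be an integer, let e₁,…,e_d be positive reals, q_e(τ) = τ^d + Σ_{k=1}^d e_k τ^{d−k}, and let F(e₁,…,e_d) = ∫₀^∞ [ d − τ·q_e′(τ)/q_e(τ) − e₁/(τ+1) ] dτ be the entropy as a function of the elementary symmetric polynomials. Then for every integer m ≥ 2 and every choice of indices i₁,…,i_m ∈ {1,…,d}, the m-th mixed partial derivative ∂^m F/∂e_{i₁}⋯∂e_{i_m} at (e₁,…,e_d) equals (−1)^{m−1} (m−1)! ∫₀^∞ τ^{md − (i₁+⋯+i_m)} / q_e(τ)^m dτ. In particular, this mixed partial derivative depends only on the sum of the indices i₁+⋯+i_m. -/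
open MeasureTheory Real

/-!
Set `K_k(e) = ∫₀^∞ (τ^(d-k) / q_e(τ) - [k = 1] / (τ+1)) dτ`. From
`τ q_e'(τ) = d q_e(τ) - ∑ k e_k τ^(d-k)` one gets the Euler-type formula `F(e) = ∑ k e_k K_k(e)`.
Differentiating it under the integral sign yields
`∂F/∂e_i = i K_i - ∑ k e_k ∫₀^∞ τ^(d-k) τ^(d-i) / q_e(τ)² dτ`,
and integrating the derivative of `τ^(d-i+1) / q_e(τ)` over `(0, ∞)` identifies the sum as
`(i - 1) K_i + [i = 1]`. Hence `∂F/∂e_i = K_i - [i = 1]`, and since `q_e` is affine in `e`, each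
further `∂/∂e_j` multiplies the integrand by `τ^(d-j) / q_e(τ)` and by the next factor `-1, -2, …`.
-/

section IteratedFDeriv

variable {𝕜 E F : Type*} [NontriviallyNormedField 𝕜] [NormedAddCommGroup E] [NormedSpace 𝕜 E]
  [NormedAddCommGroup F] [NormedSpace 𝕜 F] {f : E → F} {x : E} {n : ℕ}

theorem iteratedFDeriv_succ_apply_eq_iteratedFDeriv_fderiv_apply
    (hf : ContDiffAt 𝕜 (n + 1 : ℕ) f x) (v : Fin (n + 1) → E) :
    iteratedFDeriv 𝕜 (n + 1) f x v =
      iteratedFDeriv 𝕜 n (fun y ↦ fderiv 𝕜 f y (v (Fin.last n))) x (Fin.init v) := by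
  have hf' : ContDiffAt 𝕜 n (fderiv 𝕜 f) x := hf.fderiv_right (by norm_cast)
  have hcomm := (ContinuousLinearMap.apply 𝕜 F (v (Fin.last n))).iteratedFDeriv_comp_left hf' le_rfl
  rw [iteratedFDeriv_succ_apply_right]
  exact (DFunLike.congr_fun hcomm (Fin.init v)).symm

theorem iteratedFDeriv_succ_sub_const (c : F) :
    iteratedFDeriv 𝕜 (n + 1) (fun y ↦ f y - c) x = iteratedFDeriv 𝕜 (n + 1) f x := by
  have hfderiv : fderiv 𝕜 (fun y ↦ f y - c) = fderiv 𝕜 f := funext fun y ↦ fderiv_sub_const c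
  ext v
  rw [iteratedFDeriv_succ_apply_right, iteratedFDeriv_succ_apply_right, hfderiv]

end IteratedFDeriv

/-- The open positive orthant of `ℝ^ι`, the domain of the parameters. -/
def positiveOrthant (ι : Type*) : Set (ι → ℝ) := Set.univ.pi fun _ ↦ Set.Ioi 0

section PositiveOrthant

variable {ι : Type*} {x : ι → ℝ}

theorem mem_positiveOrthant : x ∈ positiveOrthant ι ↔ ∀ i, 0 < x i := by
  simp [positiveOrthant]

theorem isOpen_positiveOrthant [Finite ι] : IsOpen (positiveOrthant ι) :=
  isOpen_set_pi Set.finite_univ fun _ _ ↦ isOpen_Ioi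

end PositiveOrthant

section AffineFamily

variable {α ι : Type*} [Fintype ι]

/-- The affine family of functions `t ↦ p t + ∑ i, x i * w i t` with parameter `x : ι → ℝ`; the
polynomials `q_e` form such a family. -/
def affineFamily (p : α → ℝ) (w : ι → α → ℝ) (x : ι → ℝ) (t : α) : ℝ := p t + ∑ i, x i * w i t

variable {p : α → ℝ} {w : ι → α → ℝ} {x y : ι → ℝ} {t : α}

theorem affineFamily_pos (hp : 0 < p t) (hw : ∀ i, 0 ≤ w i t) (hx : ∀ i, 0 ≤ x i) :
    0 < affineFamily p w x t :=
  add_pos_of_pos_of_nonneg hp <| Finset.sum_nonneg fun i _ ↦ mul_nonneg (hx i) (hw i)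

theorem mul_le_affineFamily (hp : 0 ≤ p t) (hw : ∀ i, 0 ≤ w i t) (hx : ∀ i, 0 ≤ x i) (i : ι) :
    x i * w i t ≤ affineFamily p w x t :=
  (Finset.single_le_sum (fun j _ ↦ mul_nonneg (hx j) (hw j)) (Finset.mem_univ i)).trans
    (le_add_of_nonneg_left hp)

theorem affineFamily_le_mul_of_le {c : ℝ} (hc : 1 ≤ c) (hp : 0 ≤ p t) (hw : ∀ i, 0 ≤ w i t)
    (hxy : ∀ i, x i ≤ c * y i) : affineFamily p w x t ≤ c * affineFamily p w y t := by
  rw [affineFamily, affineFamily, mul_add, Finset.mul_sum]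
  refine add_le_add (le_mul_of_one_le_left hp hc) (Finset.sum_le_sum fun i _ ↦ ?_)
  rw [← mul_assoc]
  exact mul_le_mul_of_nonneg_right (hxy i) (hw i)

theorem norm_const_div_affineFamily_pow_le (c : ℝ) {b : ℝ} (hb : 1 ≤ b) (hp : 0 < p t)
    (hw : ∀ i, 0 ≤ w i t) (hy : ∀ i, 0 < y i) (hyx : ∀ i, y i ≤ b * x i) (m : ℕ) :
    ‖c / affineFamily p w x t ^ m‖ ≤ b ^ m * ‖c / affineFamily p w y t ^ m‖ := by
  have hqy := affineFamily_pos hp hw fun i ↦ (hy i).le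
  have hle := affineFamily_le_mul_of_le hb hp.le hw hyx
  have hqx : 0 < affineFamily p w x t := pos_of_mul_pos_right (hqy.trans_le hle) (by positivity)
  rw [norm_div, norm_div, norm_of_nonneg (pow_pos hqx m).le, norm_of_nonneg (pow_pos hqy m).le,
    ← mul_div_assoc, div_le_div_iff₀ (pow_pos hqx m) (pow_pos hqy m)]
  calc ‖c‖ * affineFamily p w y t ^ m
      ≤ ‖c‖ * (b * affineFamily p w x t) ^ m := by gcongr
    _ = b ^ m * ‖c‖ * affineFamily p w x t ^ m := by ring

theorem hasFDerivAt_affineFamily (p : α → ℝ) (w : ι → α → ℝ) (x : ι → ℝ) (t : α) :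
    HasFDerivAt (fun y ↦ affineFamily p w y t)
      (∑ i, w i t • (ContinuousLinearMap.proj i : (ι → ℝ) →L[ℝ] ℝ)) x :=
  HasFDerivAt.const_add _ <| HasFDerivAt.fun_sum fun i _ ↦ (hasFDerivAt_apply i x).mul_const _

theorem hasDerivAt_const_div_pow (c : ℝ) (m : ℕ) {y : ℝ} (hy : y ≠ 0) :
    HasDerivAt (fun z ↦ c / z ^ m) (-m * c / y ^ (m + 1)) y := by
  refine (((hasDerivAt_pow m y).inv (pow_ne_zero m hy)).const_mul c).congr_deriv ?_
  rcases m with _ | m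
  · simp
  · rw [Nat.add_sub_cancel]
    field_simp
    ring

theorem hasFDerivAt_const_div_affineFamily_pow (c : ℝ) (m : ℕ) (hx : affineFamily p w x t ≠ 0) :
    HasFDerivAt (fun y ↦ c / affineFamily p w y t ^ m)
      (∑ i, (-m * (c * w i t) / affineFamily p w x t ^ (m + 1)) •
        (ContinuousLinearMap.proj i : (ι → ℝ) →L[ℝ] ℝ)) x := by
  refine ((hasDerivAt_const_div_pow c m hx).comp_hasFDerivAt x
    (hasFDerivAt_affineFamily p w x t)).congr_fderiv ?_
  rw [Finset.smul_sum]
  refine Finset.sum_congr rfl fun i _ ↦ ?_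
  rw [smul_smul]
  congr 1
  ring

end AffineFamily

section RegularizedMoment

variable {α ι : Type*} [MeasurableSpace α] [Fintype ι] {μ : Measure α}
  {p : α → ℝ} {w : ι → α → ℝ} {f g : α → ℝ} {m : ℕ} {e : ι → ℝ}

/-- An affine family with positive base function and nonnegative weights: on the positive orthant
its members are positive almost everywhere, and nearby members are comparable. -/
structure IsPositiveFamily (μ : Measure α) (p : α → ℝ) (w : ι → α → ℝ) : Prop where
  aestronglyMeasurable_base : AEStronglyMeasurable p μ
  aestronglyMeasurable_weight : ∀ i, AEStronglyMeasurable (w i) μ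
  base_pos : ∀ᵐ t ∂μ, 0 < p t
  weight_nonneg : ∀ᵐ t ∂μ, ∀ i, 0 ≤ w i t

/-- The integral of `f / q ^ m` over the member `q` of the family with parameter `x`, with a
subtraction term `g` that does not depend on `x` and may be needed for convergence. -/
noncomputable def regularizedMoment (μ : Measure α) (p : α → ℝ) (w : ι → α → ℝ) (f g : α → ℝ)
    (m : ℕ) (x : ι → ℝ) : ℝ :=
  ∫ t, (f t / affineFamily p w x t ^ m - g t) ∂μ

/-- The measurability and integrability under which `regularizedMoment` is smooth on the positive
orthant: its integrand and the partial derivatives of its integrand are integrable. -/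
structure HasRegularizedMoment (μ : Measure α) (p : α → ℝ) (w : ι → α → ℝ) (f g : α → ℝ)
    (m : ℕ) : Prop where
  aestronglyMeasurable : AEStronglyMeasurable f μ
  integrable_sub : ∀ x ∈ positiveOrthant ι,
    Integrable (fun t ↦ f t / affineFamily p w x t ^ m - g t) μ
  integrable_mul_weight : ∀ x ∈ positiveOrthant ι, ∀ i,
    Integrable (fun t ↦ f t * w i t / affineFamily p w x t ^ (m + 1)) μ

theorem regularizedMoment_zero (x : ι → ℝ) :
    regularizedMoment μ p w f 0 m x = ∫ t, f t / affineFamily p w x t ^ m ∂μ := by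
  simp only [regularizedMoment, Pi.zero_apply, sub_zero]

namespace IsPositiveFamily

theorem aestronglyMeasurable_affineFamily (h : IsPositiveFamily μ p w) (x : ι → ℝ) :
    AEStronglyMeasurable (affineFamily p w x) μ :=
  h.aestronglyMeasurable_base.add <| Finset.univ.aestronglyMeasurable_fun_sum fun i _ ↦
    (h.aestronglyMeasurable_weight i).const_mul (x i)

theorem aestronglyMeasurable_div_pow (h : IsPositiveFamily μ p w) (hf : AEStronglyMeasurable f μ)
    (m : ℕ) (x : ι → ℝ) : AEStronglyMeasurable (fun t ↦ f t / affineFamily p w x t ^ m) μ :=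
  hf.div₀ ((h.aestronglyMeasurable_affineFamily x).pow m)

theorem integrable_mul_weight (h : IsPositiveFamily μ p w) (he : e ∈ positiveOrthant ι)
    (hint : Integrable (fun t ↦ f t / affineFamily p w e t ^ m) μ) (i : ι) :
    Integrable (fun t ↦ f t * w i t / affineFamily p w e t ^ (m + 1)) μ := by
  have he := mem_positiveOrthant.1 he
  have hratio : AEStronglyMeasurable (fun t ↦ w i t / affineFamily p w e t) μ := by
    simpa only [pow_one] using h.aestronglyMeasurable_div_pow (h.aestronglyMeasurable_weight i) 1 e
  refine (hint.mul_bdd hratio (c := (e i)⁻¹) ?_).congr (.of_forall fun t ↦ ?_)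
  · filter_upwards [h.base_pos, h.weight_nonneg] with t hp hw
    have hq := affineFamily_pos hp hw fun i ↦ (he i).le
    rw [norm_of_nonneg (div_nonneg (hw i) hq.le), div_le_iff₀ hq, inv_mul_eq_div,
      le_div_iff₀' (he i)]
    exact mul_le_affineFamily hp.le hw (fun i ↦ (he i).le) i
  · simp only
    rw [div_mul_div_comm, ← pow_succ]

theorem hasRegularizedMoment_zero (h : IsPositiveFamily μ p w) (hf : AEStronglyMeasurable f μ)
    (hint : ∀ x ∈ positiveOrthant ι, Integrable (fun t ↦ f t / affineFamily p w x t ^ m) μ) :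
    HasRegularizedMoment μ p w f 0 m where
  aestronglyMeasurable := hf
  integrable_sub x hx := by simpa using hint x hx
  integrable_mul_weight x hx := h.integrable_mul_weight hx (hint x hx)

end IsPositiveFamily

namespace HasRegularizedMoment

theorem integrable_neg_mul_weight (hfg : HasRegularizedMoment μ p w f g m)
    (he : e ∈ positiveOrthant ι) (i : ι) :
    Integrable (fun t ↦ -m * (f t * w i t) / affineFamily p w e t ^ (m + 1)) μ := by
  simpa only [mul_div_assoc] using (hfg.integrable_mul_weight e he i).const_mul (-m : ℝ)

theorem neg_mul_weight (hfg : HasRegularizedMoment μ p w f g m) (h : IsPositiveFamily μ p w)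
    (i : ι) : HasRegularizedMoment μ p w (fun t ↦ -m * (f t * w i t)) 0 (m + 1) :=
  h.hasRegularizedMoment_zero
    ((hfg.aestronglyMeasurable.mul (h.aestronglyMeasurable_weight i)).const_mul _)
    fun _ hx ↦ hfg.integrable_neg_mul_weight hx i

theorem aestronglyMeasurable_integrand (hfg : HasRegularizedMoment μ p w f g m)
    (h : IsPositiveFamily μ p w) (x : ι → ℝ) :
    AEStronglyMeasurable (fun t ↦ f t / affineFamily p w x t ^ m - g t) μ := by
  have hdiv := h.aestronglyMeasurable_div_pow hfg.aestronglyMeasurable m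
  have hone : (fun _ ↦ 1) ∈ positiveOrthant ι := mem_positiveOrthant.2 fun _ ↦ one_pos
  have hg := ((hdiv _).sub (hfg.integrable_sub _ hone).1).congr
    (.of_forall fun t ↦ sub_sub_cancel _ (g t))
  exact (hdiv x).sub hg

theorem hasFDerivAt (hfg : HasRegularizedMoment μ p w f g m) (h : IsPositiveFamily μ p w)
    (he : e ∈ positiveOrthant ι) :
    HasFDerivAt (regularizedMoment μ p w f g m)
      (∑ i, regularizedMoment μ p w (fun t ↦ -m * (f t * w i t)) 0 (m + 1) e •
        (ContinuousLinearMap.proj i : (ι → ℝ) →L[ℝ] ℝ)) e := by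
  have he' := mem_positiveOrthant.1 he
  -- On the neighbourhood `s` of `e` the family stays above half of its member at `e`, so the
  -- integrable derivative at `e` dominates the nearby ones.
  let s : Set (ι → ℝ) := Set.univ.pi fun i ↦ Set.Ioi (e i / 2)
  have hs : s ∈ nhds e := (isOpen_set_pi Set.finite_univ fun i _ ↦ isOpen_Ioi).mem_nhds
    fun i _ ↦ half_lt_self (he' i)
  have hlt : ∀ x ∈ s, ∀ i, e i < 2 * x i := fun x hx i ↦
    (div_lt_iff₀' two_pos).1 (hx i (Set.mem_univ i))
  let c (i : ι) (x : ι → ℝ) (t : α) : ℝ := -m * (f t * w i t) / affineFamily p w x t ^ (m + 1)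
  have hc (i : ι) : Integrable (c i e) μ := hfg.integrable_neg_mul_weight he i
  let coord (i : ι) : (ι → ℝ) →L[ℝ] ℝ := ContinuousLinearMap.proj i
  have hcoord (i : ι) : Integrable (fun t ↦ c i e t • coord i) μ := (hc i).smul_const (coord i)
  let F' (x : ι → ℝ) (t : α) : (ι → ℝ) →L[ℝ] ℝ := ∑ i, c i x t • coord i
  have hF' : Integrable (F' e) μ := by
    exact integrable_finsetSum (f := fun i t ↦ c i e t • coord i) _ fun i _ ↦ hcoord i
  have hbound : ∀ᵐ t ∂μ, ∀ x ∈ s, ‖F' x t‖ ≤ ∑ i, 2 ^ (m + 1) * ‖c i e t‖ * ‖coord i‖ := by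
    filter_upwards [h.base_pos, h.weight_nonneg] with t hp hw x hx
    refine norm_sum_le_of_le _ fun i _ ↦ (norm_smul _ _).trans_le ?_
    exact mul_le_mul_of_nonneg_right (norm_const_div_affineFamily_pow_le _ one_le_two hp hw he'
      (fun i ↦ (hlt x hx i).le) (m + 1)) (norm_nonneg _)
  have hderiv : ∀ᵐ t ∂μ, ∀ x ∈ s,
      HasFDerivAt (fun y ↦ f t / affineFamily p w y t ^ m - g t) (F' x t) x := by
    filter_upwards [h.base_pos, h.weight_nonneg] with t hp hw x hx
    have hq : 0 < affineFamily p w x t :=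
      affineFamily_pos hp hw fun i ↦ by linarith [hlt x hx i, he' i]
    exact (hasFDerivAt_const_div_affineFamily_pow (f t) m hq.ne').sub_const (g t)
  have hint : HasFDerivAt (regularizedMoment μ p w f g m) (∫ t, F' e t ∂μ) e :=
    hasFDerivAt_integral_of_dominated_of_fderiv_le (𝕜 := ℝ) hs
      (.of_forall (hfg.aestronglyMeasurable_integrand h)) (hfg.integrable_sub e he)
      hF'.aestronglyMeasurable hbound
      (integrable_finsetSum _ fun i _ ↦ ((hc i).norm.const_mul _).mul_const _) hderiv
  refine hint.congr_fderiv ?_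
  rw [integral_finsetSum (f := fun i t ↦ c i e t • coord i) _ fun i _ ↦ hcoord i]
  simp only [integral_smul_const, regularizedMoment_zero, c, coord]

theorem fderiv_single [DecidableEq ι] (hfg : HasRegularizedMoment μ p w f g m)
    (h : IsPositiveFamily μ p w) (he : e ∈ positiveOrthant ι) (i : ι) :
    fderiv ℝ (regularizedMoment μ p w f g m) e (Pi.single i 1) =
      regularizedMoment μ p w (fun t ↦ -m * (f t * w i t)) 0 (m + 1) e := by
  rw [(hfg.hasFDerivAt h he).fderiv]
  simp [Pi.single_apply]

theorem contDiffOn (hfg : HasRegularizedMoment μ p w f g m) (h : IsPositiveFamily μ p w) (n : ℕ) :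
    ContDiffOn ℝ n (regularizedMoment μ p w f g m) (positiveOrthant ι) := by
  induction n generalizing f g m with
  | zero =>
    exact contDiffOn_zero.2 fun e he ↦ (hfg.hasFDerivAt h he).continuousAt.continuousWithinAt
  | succ n ih =>
    push_cast
    rw [contDiffOn_succ_iff_fderiv_of_isOpen isOpen_positiveOrthant]
    refine ⟨fun e he ↦ (hfg.hasFDerivAt h he).differentiableAt.differentiableWithinAt, by simp, ?_⟩
    exact ContDiffOn.congr
      (.sum fun i _ ↦ (ih (hfg.neg_mul_weight h i)).smul contDiffOn_const)
      fun e he ↦ (hfg.hasFDerivAt h he).fderiv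

theorem iteratedFDeriv_succ_single [DecidableEq ι] (hfg : HasRegularizedMoment μ p w f g m)
    (h : IsPositiveFamily μ p w) (he : e ∈ positiveOrthant ι) {n : ℕ} (idx : Fin (n + 1) → ι) :
    iteratedFDeriv ℝ (n + 1) (regularizedMoment μ p w f g m) e (fun j ↦ Pi.single (idx j) 1) =
      (-1) ^ (n + 1) * m.ascFactorial (n + 1) *
        ∫ t, f t * (∏ j, w (idx j) t) / affineFamily p w e t ^ (m + (n + 1)) ∂μ := by
  induction n generalizing f g m with
  | zero =>
    rw [iteratedFDeriv_one_apply, hfg.fderiv_single h he, regularizedMoment_zero]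
    simp [Nat.ascFactorial_succ, mul_div_assoc, integral_const_mul, integral_neg, neg_div]
  | succ n ih =>
    set i := idx (Fin.last (n + 1)) with hi
    have hsmooth := (hfg.contDiffOn h (n + 1 + 1)).contDiffAt (isOpen_positiveOrthant.mem_nhds he)
    have hpartial : (fun x ↦ fderiv ℝ (regularizedMoment μ p w f g m) x (Pi.single i 1)) =ᶠ[nhds e]
        regularizedMoment μ p w (fun t ↦ -m * (f t * w i t)) 0 (m + 1) := by
      filter_upwards [isOpen_positiveOrthant.mem_nhds he] with x hx
      exact hfg.fderiv_single h hx i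
    have hintegrand (t : α) :
        -m * (f t * w i t) * (∏ j : Fin (n + 1), w (idx j.castSucc) t) /
            affineFamily p w e t ^ (m + 1 + (n + 1)) =
          -m * (f t * (∏ j, w (idx j) t) / affineFamily p w e t ^ (m + (n + 1 + 1))) := by
      rw [Fin.prod_univ_castSucc (n := n + 1), ← hi, add_assoc m, add_comm 1]
      ring
    have hfactorial : (m.ascFactorial (n + 1 + 1) : ℝ) = m * (m + 1).ascFactorial (n + 1) := by
      exact_mod_cast Nat.ascFactorial_succ.trans (Nat.succ_ascFactorial m (n + 1)).symm
    rw [iteratedFDeriv_succ_apply_eq_iteratedFDeriv_fderiv_apply hsmooth,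
      (hpartial.iteratedFDeriv ℝ (n + 1)).self_of_nhds]
    refine (ih (hfg.neg_mul_weight h i) fun j ↦ idx j.castSucc).trans ?_
    simp only [hintegrand, integral_const_mul, hfactorial]
    ring

end HasRegularizedMoment

end RegularizedMoment

theorem integrableOn_Ioi_pow_div_of_mul_max_one_pow_le {Q : ℝ → ℝ} {b n : ℕ} {c : ℝ}
    (hQ : AEStronglyMeasurable Q (volume.restrict (Set.Ioi 0))) (hc : 0 < c) (hbn : b + 2 ≤ n)
    (hle : ∀ τ, 0 < τ → c * max 1 τ ^ n ≤ Q τ) :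
    IntegrableOn (fun τ ↦ τ ^ b / Q τ) (Set.Ioi 0) := by
  have hmeas : AEStronglyMeasurable (fun τ ↦ τ ^ b / Q τ) (volume.restrict (Set.Ioi 0)) :=
    (continuous_pow b).aestronglyMeasurable.div₀ hQ
  refine (integrable_inv_one_add_sq.const_mul (2 / c)).integrableOn.mono' hmeas ?_
  filter_upwards [ae_restrict_mem measurableSet_Ioi] with τ (hτ : 0 < τ)
  have hQpos : 0 < Q τ := lt_of_lt_of_le (by positivity) (hle τ hτ)
  have hpow {k : ℕ} (hk : k ≤ n) : τ ^ k ≤ max 1 τ ^ n :=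
    (pow_le_pow_left₀ hτ.le (le_max_right 1 τ) k).trans (pow_le_pow_right₀ (le_max_left 1 τ) hk)
  rw [norm_of_nonneg (by positivity), ← div_eq_mul_inv, div_div,
    div_le_div_iff₀ hQpos (by positivity)]
  calc τ ^ b * (c * (1 + τ ^ 2)) = c * (τ ^ b + τ ^ (b + 2)) := by ring
    _ ≤ c * (max 1 τ ^ n + max 1 τ ^ n) := by gcongr <;> exact hpow (by omega)
    _ = 2 * (c * max 1 τ ^ n) := by ring
    _ ≤ 2 * Q τ := by gcongr; exact hle τ hτ

section Entropy

variable {d : ℕ} {e : Fin d → ℝ} {τ : ℝ}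

/-- The monomial `τ ^ (d - k)` that multiplies `e_k` in `q_e(τ)`, where `k = i + 1`. -/
noncomputable def qeWeight (d : ℕ) (i : Fin d) (τ : ℝ) : ℝ := τ ^ (d - 1 - (i : ℕ))

/-- The term subtracted from `τ ^ (d - k) / q_e(τ)`, where `k = i + 1`, to make it integrable on
`(0, ∞)`: only for `k = 1` is one needed. -/
noncomputable def counterterm (i : Fin d) (τ : ℝ) : ℝ := if (i : ℕ) = 0 then 1 / (τ + 1) else 0

/-- The regularized integral of `τ ^ (d - k) / q_e(τ)` over `(0, ∞)`, where `k = i + 1`. -/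
noncomputable def qeMoment (i : Fin d) (e : Fin d → ℝ) : ℝ :=
  regularizedMoment (volume.restrict (Set.Ioi 0)) (fun τ ↦ τ ^ d) (qeWeight d) (qeWeight d i)
    (counterterm i) 1 e

theorem qe_eq_affineFamily (d : ℕ) (e : Fin d → ℝ) :
    qe d e = affineFamily (fun τ ↦ τ ^ d) (qeWeight d) e := rfl

theorem continuous_qe (d : ℕ) (e : Fin d → ℝ) : Continuous (qe d e) := by
  unfold qe
  fun_prop

theorem isPositiveFamily_qeWeight (d : ℕ) :
    IsPositiveFamily (volume.restrict (Set.Ioi 0)) (fun τ ↦ τ ^ d) (qeWeight d) where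
  aestronglyMeasurable_base := (continuous_pow d).aestronglyMeasurable
  aestronglyMeasurable_weight i := (continuous_pow (d - 1 - (i : ℕ))).aestronglyMeasurable
  base_pos := by
    filter_upwards [ae_restrict_mem measurableSet_Ioi] with τ hτ using pow_pos hτ d
  weight_nonneg := by
    filter_upwards [ae_restrict_mem measurableSet_Ioi] with τ hτ i using (pow_pos hτ _).le

theorem exists_mul_max_one_pow_le_qe (he : e ∈ positiveOrthant (Fin d)) :
    ∃ c, 0 < c ∧ ∀ τ, 0 ≤ τ → c * max 1 τ ^ d ≤ qe d e τ := by
  rcases d with _ | d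
  · exact ⟨1, one_pos, fun τ _ ↦ by simp [qe]⟩
  have he := mem_positiveOrthant.1 he
  refine ⟨min 1 (e (Fin.last d)), lt_min one_pos (he _), fun τ hτ ↦ ?_⟩
  have hpow : 0 ≤ τ ^ (d + 1) := by positivity
  have hnonneg (i : Fin (d + 1)) : 0 ≤ e i * τ ^ (d + 1 - 1 - (i : ℕ)) :=
    mul_nonneg (he i).le (pow_nonneg hτ _)
  rcases le_total 1 τ with h | h
  · rw [max_eq_right h]
    exact (mul_le_of_le_one_left hpow (min_le_left _ _)).trans
      (le_add_of_nonneg_right (Finset.sum_nonneg fun i _ ↦ hnonneg i))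
  · have hlast : e (Fin.last d) ≤ ∑ i : Fin (d + 1), e i * τ ^ (d + 1 - 1 - (i : ℕ)) := by
      simpa using Finset.single_le_sum (fun i _ ↦ hnonneg i) (Finset.mem_univ (Fin.last d))
    rw [max_eq_left h, one_pow, mul_one]
    exact (min_le_right _ _).trans (hlast.trans (le_add_of_nonneg_left hpow))

theorem qe_pos (he : e ∈ positiveOrthant (Fin d)) (hτ : 0 ≤ τ) : 0 < qe d e τ := by
  obtain ⟨c, hc, hle⟩ := exists_mul_max_one_pow_le_qe he
  exact lt_of_lt_of_le (by positivity) (hle τ hτ)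

theorem integrableOn_pow_div_qe_pow (he : e ∈ positiveOrthant (Fin d)) {b m : ℕ}
    (hb : b + 2 ≤ m * d) : IntegrableOn (fun τ ↦ τ ^ b / qe d e τ ^ m) (Set.Ioi 0) := by
  obtain ⟨c, hc, hle⟩ := exists_mul_max_one_pow_le_qe he
  refine integrableOn_Ioi_pow_div_of_mul_max_one_pow_le
    ((continuous_qe d e).pow m).aestronglyMeasurable (pow_pos hc m) hb fun τ hτ ↦ ?_
  rw [mul_comm m d, pow_mul, ← mul_pow]
  exact pow_le_pow_left₀ (by positivity) (hle τ hτ.le) m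

theorem integrableOn_qeWeight_mul_qeWeight_div (he : e ∈ positiveOrthant (Fin d)) (i j : Fin d) :
    IntegrableOn (fun τ ↦ qeWeight d i τ * qeWeight d j τ / qe d e τ ^ 2) (Set.Ioi 0) := by
  simp only [qeWeight, ← pow_add]
  exact integrableOn_pow_div_qe_pow he (by omega)

theorem integrableOn_pow_div_qe_sub (he : e ∈ positiveOrthant (Fin d)) (hd : 0 < d) :
    IntegrableOn (fun τ ↦ τ ^ (d - 1) / qe d e τ - 1 / (τ + 1)) (Set.Ioi 0) := by
  obtain ⟨c, hc, hle⟩ := exists_mul_max_one_pow_le_qe he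
  have hpow {b : ℕ} (hb : b + 2 ≤ d + 1) :
      IntegrableOn (fun τ ↦ τ ^ b / (qe d e τ * (τ + 1))) (Set.Ioi 0) := by
    refine integrableOn_Ioi_pow_div_of_mul_max_one_pow_le
      ((continuous_qe d e).mul (by fun_prop)).aestronglyMeasurable hc hb fun τ hτ ↦ ?_
    rw [pow_succ, ← mul_assoc]
    exact mul_le_mul (hle τ hτ.le) (max_le (by linarith) (by linarith)) (by positivity)
      (qe_pos he hτ.le).le
  -- Over the common denominator `q_e(τ) (τ + 1)` the leading terms `τ ^ d` cancel.
  have hdiff : IntegrableOn (fun τ ↦ τ ^ (d - 1) / (qe d e τ * (τ + 1)) -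
      ∑ i : Fin d, e i * (τ ^ (d - 1 - (i : ℕ)) / (qe d e τ * (τ + 1)))) (Set.Ioi 0) :=
    (hpow (by omega)).sub <| integrable_finsetSum _ fun i _ ↦ (hpow (by omega)).const_mul (e i)
  refine hdiff.congr_fun (fun τ (hτ : 0 < τ) ↦ ?_) measurableSet_Ioi
  have hq := qe_pos he hτ.le
  have hsum : ∑ i : Fin d, e i * τ ^ (d - 1 - (i : ℕ)) = qe d e τ - τ * τ ^ (d - 1) := by
    rw [mul_pow_sub_one hd.ne', qe, add_sub_cancel_left]
  simp only [← mul_div_assoc, ← Finset.sum_div, hsum]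
  field_simp
  ring

theorem integrableOn_qeWeight_div_sub_counterterm (he : e ∈ positiveOrthant (Fin d)) (i : Fin d) :
    IntegrableOn (fun τ ↦ qeWeight d i τ / qe d e τ - counterterm i τ) (Set.Ioi 0) := by
  unfold qeWeight counterterm
  split_ifs with hi
  · rw [hi]
    exact integrableOn_pow_div_qe_sub he i.pos
  · simpa using integrableOn_pow_div_qe_pow he (m := 1) (b := d - 1 - (i : ℕ)) (by omega)

theorem hasRegularizedMoment_qeWeight (i : Fin d) :
    HasRegularizedMoment (volume.restrict (Set.Ioi 0)) (fun τ ↦ τ ^ d) (qeWeight d) (qeWeight d i)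
      (counterterm i) 1 where
  aestronglyMeasurable := (isPositiveFamily_qeWeight d).aestronglyMeasurable_weight i
  integrable_sub x hx := by
    simpa only [IntegrableOn, pow_one, qe_eq_affineFamily] using
      integrableOn_qeWeight_div_sub_counterterm hx i
  integrable_mul_weight x hx j := integrableOn_qeWeight_mul_qeWeight_div hx i j

theorem qeMoment_eq_integral (i : Fin d) (e : Fin d → ℝ) :
    qeMoment i e = ∫ τ in Set.Ioi 0, (qeWeight d i τ / qe d e τ - counterterm i τ) := by
  simp only [qeMoment, regularizedMoment, pow_one, qe_eq_affineFamily]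

theorem hasDerivAt_qe (d : ℕ) (e : Fin d → ℝ) (τ : ℝ) :
    HasDerivAt (qe d e) (deriv (qe d e) τ) τ := by
  refine DifferentiableAt.hasDerivAt ?_
  unfold qe
  fun_prop

theorem mul_deriv_qe (d : ℕ) (e : Fin d → ℝ) (τ : ℝ) :
    τ * deriv (qe d e) τ =
      d * qe d e τ - ∑ k : Fin d, ((k : ℕ) + 1) * e k * qeWeight d k τ := by
  have hderiv : HasDerivAt (qe d e) (d * τ ^ (d - 1) +
      ∑ k : Fin d, e k * ((d - 1 - (k : ℕ) : ℕ) * τ ^ (d - 1 - (k : ℕ) - 1))) τ :=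
    (hasDerivAt_pow d τ).add <| .fun_sum fun k _ ↦ (hasDerivAt_pow _ τ).const_mul (e k)
  have hpow (n : ℕ) : τ * (n * τ ^ (n - 1)) = n * τ ^ n := by
    rcases n with _ | n
    · simp
    · rw [Nat.add_sub_cancel]
      ring
  have hcast (k : Fin d) : ((d - 1 - (k : ℕ) : ℕ) : ℝ) = d - ((k : ℕ) + 1) := by
    rw [Nat.sub_sub, Nat.cast_sub (by omega)]
    push_cast
    ring
  rw [hderiv.deriv, qe, mul_add, hpow, mul_add, add_sub_assoc, Finset.mul_sum, Finset.mul_sum,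
    ← Finset.sum_sub_distrib]
  congr 1
  refine Finset.sum_congr rfl fun k _ ↦ ?_
  rw [mul_left_comm, hpow, hcast, qeWeight]
  ring

theorem entF_eq_sum_mul_qeMoment (hd : 2 ≤ d) (he : e ∈ positiveOrthant (Fin d)) :
    entF d hd e = ∑ i : Fin d, ((i : ℕ) + 1) * e i * qeMoment i e := by
  have hcounter (τ : ℝ) : ∑ i : Fin d, ((i : ℕ) + 1) * e i * counterterm i τ =
      e ⟨0, by omega⟩ / (τ + 1) := by
    rw [Finset.sum_eq_single ⟨0, by omega⟩]
    · simp [counterterm, div_eq_mul_inv]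
    · intro i _ hi
      rw [counterterm, if_neg fun h ↦ hi (Fin.ext h), mul_zero]
    · simp
  simp only [qeMoment_eq_integral, ← integral_const_mul]
  rw [← integral_finsetSum _ fun i _ ↦
    (integrableOn_qeWeight_div_sub_counterterm he i).const_mul _]
  refine setIntegral_congr_fun measurableSet_Ioi fun τ (hτ : 0 < τ) ↦ ?_
  have hq := qe_pos he hτ.le
  simp only [mul_sub, Finset.sum_sub_distrib, hcounter, mul_deriv_qe, ← mul_div_assoc,
    ← Finset.sum_div]
  field_simp
  ring

theorem contDiffOn_entF (hd : 2 ≤ d) (n : ℕ) :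
    ContDiffOn ℝ n (entF d hd) (positiveOrthant (Fin d)) := by
  refine ContDiffOn.congr (.sum fun i _ ↦ ?_) fun x hx ↦ entF_eq_sum_mul_qeMoment hd hx
  exact (contDiffOn_const.mul (contDiff_apply ℝ ℝ i).contDiffOn).mul <|
    (hasRegularizedMoment_qeWeight i).contDiffOn (isPositiveFamily_qeWeight d) n

theorem tendsto_pow_div_qe (he : e ∈ positiveOrthant (Fin d)) {b : ℕ} (hb : b < d) :
    Filter.Tendsto (fun τ ↦ τ ^ b / qe d e τ) Filter.atTop (nhds 0) := by
  refine squeeze_zero' ?_ ?_ tendsto_inv_atTop_zero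
  · filter_upwards [Filter.eventually_ge_atTop 0] with τ hτ
    have hq := qe_pos he hτ
    positivity
  · filter_upwards [Filter.eventually_ge_atTop 1] with τ hτ
    have hτ0 : 0 < τ := one_pos.trans_le hτ
    have hle : τ ^ d ≤ qe d e τ := le_add_of_nonneg_right <| Finset.sum_nonneg fun i _ ↦
      mul_nonneg (mem_positiveOrthant.1 he i).le (pow_nonneg hτ0.le _)
    rw [inv_eq_one_div, div_le_div_iff₀ (qe_pos he hτ0.le) hτ0, one_mul, ← pow_succ]
    exact (pow_le_pow_right₀ hτ hb).trans hle

theorem tendsto_pow_sub_div_qe (he : e ∈ positiveOrthant (Fin d)) (i : Fin d) :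
    Filter.Tendsto (fun τ ↦ τ ^ (d - (i : ℕ)) / qe d e τ) Filter.atTop
      (nhds (if (i : ℕ) = 0 then 1 else 0)) := by
  split_ifs with hi
  · have hlim : Filter.Tendsto (fun τ ↦ 1 - ∑ k : Fin d, e k * (qeWeight d k τ / qe d e τ))
        Filter.atTop (nhds (1 - ∑ k : Fin d, e k * 0)) :=
      tendsto_const_nhds.sub <| tendsto_finsetSum _ fun k _ ↦
        (tendsto_pow_div_qe he (by omega)).const_mul (e k)
    simp only [mul_zero, Finset.sum_const_zero, sub_zero] at hlim
    refine hlim.congr' ?_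
    filter_upwards [Filter.eventually_ge_atTop 0] with τ hτ
    have hq := (qe_pos he hτ).ne'
    simp only [← mul_div_assoc, ← Finset.sum_div]
    rw [hi, Nat.sub_zero, one_sub_div hq]
    exact congrArg (· / qe d e τ) (add_sub_cancel_right _ _)
  · exact tendsto_pow_div_qe he (by omega)

theorem hasDerivAt_pow_sub_div_qe (he : e ∈ positiveOrthant (Fin d)) (i : Fin d) (hτ : 0 ≤ τ) :
    HasDerivAt (fun t ↦ t ^ (d - (i : ℕ)) / qe d e t)
      (∑ k : Fin d, ((k : ℕ) + 1) * e k * (qeWeight d k τ * qeWeight d i τ / qe d e τ ^ 2) -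
        (i : ℕ) * (qeWeight d i τ / qe d e τ - counterterm i τ)) τ := by
  have hq := (qe_pos he hτ).ne'
  have hsum : ∑ k : Fin d, ((k : ℕ) + 1) * e k * (qeWeight d k τ * qeWeight d i τ / qe d e τ ^ 2) =
      (d * qe d e τ - τ * deriv (qe d e) τ) * qeWeight d i τ / qe d e τ ^ 2 := by
    rw [mul_deriv_qe, sub_sub_cancel, Finset.sum_mul, Finset.sum_div]
    exact Finset.sum_congr rfl fun k _ ↦ by ring
  have hcounter : (i : ℕ) * counterterm i τ = 0 := by
    by_cases hi : (i : ℕ) = 0 <;> simp [counterterm, hi]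
  have hpow : τ ^ (d - (i : ℕ)) = τ * qeWeight d i τ := by
    rw [qeWeight, ← pow_succ']
    congr 1
    omega
  refine ((hasDerivAt_pow (d - (i : ℕ)) τ).div (hasDerivAt_qe d e τ) hq).congr_deriv ?_
  rw [hsum, mul_sub, hcounter, sub_zero, hpow, Nat.cast_sub i.is_lt.le, Nat.sub_right_comm,
    ← qeWeight]
  field_simp
  ring

theorem sum_mul_integral_qeWeight_mul_qeWeight_div (he : e ∈ positiveOrthant (Fin d))
    (i : Fin d) :
    ∑ k : Fin d, ((k : ℕ) + 1) * e k *
        ∫ τ in Set.Ioi 0, qeWeight d k τ * qeWeight d i τ / qe d e τ ^ 2 =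
      (i : ℕ) * qeMoment i e + if (i : ℕ) = 0 then 1 else 0 := by
  have hint (k : Fin d) := (integrableOn_qeWeight_mul_qeWeight_div he k i).const_mul
    (((k : ℕ) + 1) * e k)
  have hsum := integrable_finsetSum Finset.univ fun k _ ↦ hint k
  have hmoment := (integrableOn_qeWeight_div_sub_counterterm he i).const_mul (i : ℕ)
  have hparts := integral_Ioi_of_hasDerivAt_of_tendsto'
    (fun τ hτ ↦ hasDerivAt_pow_sub_div_qe he i hτ) (hsum.sub hmoment) (tendsto_pow_sub_div_qe he i)
  rw [integral_sub hsum hmoment, integral_finsetSum _ fun k _ ↦ hint k,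
    zero_pow (Nat.sub_pos_of_lt i.is_lt).ne', zero_div, sub_zero] at hparts
  simp only [integral_const_mul, ← qeMoment_eq_integral] at hparts
  linarith

theorem fderiv_entF_single (hd : 2 ≤ d) (he : e ∈ positiveOrthant (Fin d)) (i : Fin d) :
    fderiv ℝ (entF d hd) e (Pi.single i 1) = qeMoment i e - if (i : ℕ) = 0 then 1 else 0 := by
  have hmoment (k : Fin d) : HasFDerivAt (qeMoment k) (fderiv ℝ (qeMoment k) e) e :=
    ((hasRegularizedMoment_qeWeight k).hasFDerivAt
      (isPositiveFamily_qeWeight d) he).differentiableAt.hasFDerivAt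
  have hpartial (k : Fin d) : fderiv ℝ (qeMoment k) e (Pi.single i 1) =
      -∫ τ in Set.Ioi 0, qeWeight d k τ * qeWeight d i τ / qe d e τ ^ 2 := by
    refine ((hasRegularizedMoment_qeWeight k).fderiv_single
      (isPositiveFamily_qeWeight d) he i).trans ?_
    simp [regularizedMoment_zero, neg_div, integral_neg, qe_eq_affineFamily]
  have hsum := HasFDerivAt.fun_sum (u := Finset.univ) fun (k : Fin d) _ ↦
    ((hasFDerivAt_apply (𝕜 := ℝ) k e).const_mul ((k : ℕ) + 1 : ℝ)).mul (hmoment k)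
  have hentF : entF d hd =ᶠ[nhds e] fun x ↦ ∑ k : Fin d, ((k : ℕ) + 1) * x k * qeMoment k x := by
    filter_upwards [isOpen_positiveOrthant.mem_nhds he] with x hx
    exact entF_eq_sum_mul_qeMoment hd hx
  have hparts := sum_mul_integral_qeWeight_mul_qeWeight_div he i
  rw [(hsum.congr_of_eventuallyEq hentF).fderiv]
  simp only [Finset.sum_add_distrib, add_apply, sum_apply, smul_apply, hpartial, smul_eq_mul,
    mul_neg, Finset.sum_neg_distrib, hparts, neg_add_rev, ContinuousLinearMap.proj_apply,
    Pi.single_apply, mul_ite, mul_one, mul_zero, Finset.sum_ite_eq', Finset.mem_univ, ↓reduceIte]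
  ring

theorem prod_qeWeight {m : ℕ} (idx : Fin m → Fin d) (τ : ℝ) :
    ∏ j, qeWeight d (idx j) τ = τ ^ (m * d - ∑ j, ((idx j : ℕ) + 1)) := by
  have hadd : ∑ j, (d - 1 - (idx j : ℕ)) + ∑ j, ((idx j : ℕ) + 1) = m * d := by
    rw [← Finset.sum_add_distrib, Finset.sum_congr rfl (g := fun _ ↦ d) fun j _ ↦ by omega]
    simp
  simp only [qeWeight, Finset.prod_pow_eq_pow_sum, ← hadd, Nat.add_sub_cancel]

theorem iteratedFDeriv_entF_single (hd : 2 ≤ d) (he : e ∈ positiveOrthant (Fin d)) {n : ℕ}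
    (idx : Fin (n + 2) → Fin d) :
    iteratedFDeriv ℝ (n + 2) (entF d hd) e (fun j ↦ Pi.single (idx j) 1) =
      (-1) ^ (n + 1) * (n + 1).factorial *
        ∫ τ in Set.Ioi 0, (∏ j, qeWeight d (idx j) τ) / qe d e τ ^ (n + 2) := by
  set i := idx (Fin.last (n + 1)) with hi
  have hsmooth := (contDiffOn_entF hd (n + 1 + 1)).contDiffAt (isOpen_positiveOrthant.mem_nhds he)
  have hpartial : (fun x ↦ fderiv ℝ (entF d hd) x (Pi.single i 1)) =ᶠ[nhds e]
      fun x ↦ qeMoment i x - if (i : ℕ) = 0 then 1 else 0 := by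
    filter_upwards [isOpen_positiveOrthant.mem_nhds he] with x hx
    exact fderiv_entF_single hd hx i
  rw [iteratedFDeriv_succ_apply_eq_iteratedFDeriv_fderiv_apply hsmooth,
    (hpartial.iteratedFDeriv ℝ (n + 1)).self_of_nhds, iteratedFDeriv_succ_sub_const]
  refine ((hasRegularizedMoment_qeWeight i).iteratedFDeriv_succ_single
    (isPositiveFamily_qeWeight d) he fun j ↦ idx j.castSucc).trans ?_
  simp only [Nat.one_ascFactorial, ← qe_eq_affineFamily, add_comm 1 (n + 1),
    Fin.prod_univ_castSucc (n := n + 1), ← hi, mul_comm (qeWeight d i _)]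

end Entropy

/-- **Higher derivatives of the entropy in the symmetric-polynomial variables.**
For `m ≥ 2` and indices `i₁, …, i_m ∈ {1, …, d}` (here `idx j : Fin d` encodes
the index `(idx j) + 1`), the `m`-th mixed partial derivative of `F` equals
`(−1)^{m−1}(m−1)! ∫₀^∞ τ^{md−(i₁+⋯+i_m)}/q_e(τ)^m dτ`; in particular it
depends only on the sum `i₁ + ⋯ + i_m` of the indices. -/
theorem entropy_higher_derivatives (d : ℕ) (hd : 2 ≤ d)
    (e : Fin d → ℝ) (he : ∀ i, 0 < e i) (m : ℕ) (hm : 2 ≤ m)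
    (idx : Fin m → Fin d) :
    iteratedFDeriv ℝ m (entF d hd) e (fun j => Pi.single (idx j) 1) =
        (-1 : ℝ) ^ (m - 1) * (m - 1).factorial *
          ∫ τ in Set.Ioi (0 : ℝ),
            τ ^ (m * d - ∑ j, ((idx j : ℕ) + 1)) / (qe d e τ) ^ m ∧
    ∀ idx' : Fin m → Fin d, (∑ j, ((idx j : ℕ) + 1)) = (∑ j, ((idx' j : ℕ) + 1)) →
      iteratedFDeriv ℝ m (entF d hd) e (fun j => Pi.single (idx j) 1) =
        iteratedFDeriv ℝ m (entF d hd) e (fun j => Pi.single (idx' j) 1) := by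
  have hformula (idx : Fin m → Fin d) :
      iteratedFDeriv ℝ m (entF d hd) e (fun j ↦ Pi.single (idx j) 1) =
        (-1 : ℝ) ^ (m - 1) * (m - 1).factorial *
          ∫ τ in Set.Ioi (0 : ℝ), τ ^ (m * d - ∑ j, ((idx j : ℕ) + 1)) / (qe d e τ) ^ m := by
    obtain ⟨n, rfl⟩ := Nat.exists_eq_add_of_le' hm
    simp only [iteratedFDeriv_entF_single hd (mem_positiveOrthant.2 he), prod_qeWeight,
      Nat.add_succ_sub_one]
  refine ⟨hformula idx, fun idx' hsum ↦ ?_⟩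
  rw [hformula idx, hformula idx', hsum]
end

section
/- Let d ≥ 2 be an integer and let e₂,…,e_d be nonnegative real numbers, not all zero. Then the entropy at e₁ = 1, given by the half-axis formula F(1,e₂,…,e_d) = ∫₀^∞ [ ln(τ^d + τ^{d−1} + Σ_{k=2}^d e_k τ^{d−k}) + (1−d) ln τ − ln(τ+1) ] dτ, admits the Levy–Khintchine representation F(1,e₂,…,e_d) = ∫₀^∞ ∫₀^∞ ( 1 − exp( −t·Σ_{i=2}^d e_i τ^{d−i} ) ) · t^{−1} · exp( −t(τ^d + τ^{d−1}) ) dt dτ, where both integrals are over (0,∞). -/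
open MeasureTheory Real

/-!
The identity holds pointwise in `τ`. With `a = τ ^ d + τ ^ (d - 1) = τ ^ (d - 1) * (τ + 1)` and
`s = ∑ eₖ τ ^ (d - k)`, the integrand of the half-axis formula is `log ((a + s) / a)`, and the inner
integral over `t` is the Frullani integral of `exp (-·)` between the rates `a` and `a + s`.
-/

open Set Filter Topology

theorem abs_exp_sub_exp_le (x y : ℝ) : |exp x - exp y| ≤ |x - y| * max (exp x) (exp y) := by
  wlog hxy : x ≤ y generalizing x y
  · simpa only [abs_sub_comm, max_comm] using this y x (le_of_not_ge hxy)
  have hexp : exp x ≤ exp y := exp_le_exp.mpr hxy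
  rw [max_eq_right hexp, abs_sub_comm, abs_of_nonneg (sub_nonneg.mpr hexp), abs_sub_comm,
    abs_of_nonneg (sub_nonneg.mpr hxy)]
  calc exp y - exp x
    _ = (1 - exp (x - y)) * exp y := by rw [sub_mul, ← exp_add, sub_add_cancel, one_mul]
    _ ≤ (y - x) * exp y :=
      mul_le_mul_of_nonneg_right (by linarith [add_one_le_exp (x - y)]) (exp_nonneg y)

section Frullani

variable {a b s : ℝ}

theorem integrableOn_Ioi_inv_mul_exp_neg_mul_sub_exp_neg_mul (ha : 0 < a) (hb : 0 < b) :
    IntegrableOn (fun t ↦ t⁻¹ * (exp (-(a * t)) - exp (-(b * t)))) (Ioi 0) := by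
  have integrable_exp {c : ℝ} (hc : 0 < c) : IntegrableOn (fun t ↦ exp (-(c * t))) (Ioi 0) := by
    simpa only [neg_mul] using integrableOn_exp_mul_Ioi (neg_neg_of_pos hc) 0
  refine (((integrable_exp ha).sup (integrable_exp hb)).const_mul |b - a|).mono' (by fun_prop) ?_
  filter_upwards [ae_restrict_mem measurableSet_Ioi] with t (ht : 0 < t)
  rw [norm_mul, norm_inv, norm_of_nonneg ht.le, norm_eq_abs, inv_mul_le_iff₀ ht]
  calc |exp (-(a * t)) - exp (-(b * t))|
    _ ≤ |-(a * t) - -(b * t)| * max (exp (-(a * t))) (exp (-(b * t))) := abs_exp_sub_exp_le _ _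
    _ = t * (|b - a| * max (exp (-(a * t))) (exp (-(b * t)))) := by
      rw [show -(a * t) - -(b * t) = t * (b - a) by ring, abs_mul, abs_of_pos ht, mul_assoc]

theorem integral_Ioi_inv_mul_exp_neg_mul_sub_exp_neg_mul (ha : 0 < a) (hb : 0 < b) :
    ∫ t in Ioi 0, t⁻¹ * (exp (-(a * t)) - exp (-(b * t))) = log (b / a) := by
  have hcont : Continuous fun x : ℝ ↦ exp (-x) := by fun_prop
  have hzero : Tendsto (fun x : ℝ ↦ exp (-x)) (𝓝[>] 0) (𝓝 1) := by
    simpa using (hcont.tendsto 0).mono_left nhdsWithin_le_nhds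
  simpa using Frullani.integral_Ioi_eq (hcont.locallyIntegrable.locallyIntegrableOn _) ha hb hzero
    tendsto_exp_neg_atTop_nhds_zero (integrableOn_Ioi_inv_mul_exp_neg_mul_sub_exp_neg_mul ha hb)

theorem integral_Ioi_one_sub_exp_mul_inv_mul_exp (ha : 0 < a) (has : 0 < a + s) :
    ∫ t in Ioi 0, (1 - exp (-(t * s))) * t⁻¹ * exp (-(t * a)) = log ((a + s) / a) := by
  rw [← integral_Ioi_inv_mul_exp_neg_mul_sub_exp_neg_mul ha has]
  congr! 2 with t
  rw [show -((a + s) * t) = -(t * s) + -(t * a) by ring, exp_add, mul_comm a t]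
  ring

end Frullani

theorem log_pow_add_pow_sub_one {d : ℕ} (hd : 1 ≤ d) {τ : ℝ} (hτ : 0 < τ) :
    log (τ ^ d + τ ^ (d - 1)) = (d - 1) * log τ + log (τ + 1) := by
  have hfactor : τ ^ d + τ ^ (d - 1) = τ ^ (d - 1) * (τ + 1) := by
    rw [mul_add_one, pow_sub_one_mul (Nat.one_le_iff_ne_zero.mp hd)]
  rw [hfactor, log_mul (by positivity) (by positivity), log_pow, Nat.cast_pred hd]

theorem entropy_levy_khintchine_general (d : ℕ) (hd : 1 ≤ d) (e : ℕ → ℝ)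
    (hq : ∀ τ : ℝ, 0 < τ →
      0 < τ ^ d + τ ^ (d - 1) + ∑ k ∈ Finset.Icc 2 d, e k * τ ^ (d - k)) :
    (∫ τ in Ioi (0 : ℝ),
        (log (τ ^ d + τ ^ (d - 1) + ∑ k ∈ Finset.Icc 2 d, e k * τ ^ (d - k))
          + (1 - (d : ℝ)) * log τ - log (τ + 1))) =
      ∫ τ in Ioi (0 : ℝ), ∫ t in Ioi (0 : ℝ),
        (1 - exp (-(t * ∑ i ∈ Finset.Icc 2 d, e i * τ ^ (d - i)))) * t⁻¹ *
          exp (-(t * (τ ^ d + τ ^ (d - 1)))) := by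
  refine setIntegral_congr_fun measurableSet_Ioi fun τ (hτ : 0 < τ) ↦ ?_
  have ha : 0 < τ ^ d + τ ^ (d - 1) := by positivity
  rw [integral_Ioi_one_sub_exp_mul_inv_mul_exp ha (hq τ hτ), log_div (hq τ hτ).ne' ha.ne',
    log_pow_add_pow_sub_one hd hτ]
  ring

/-- **Levy–Khintchine representation of the entropy at `e₁ = 1`.**
For `d ≥ 2` and nonnegative `e₂, …, e_d`, not all zero, with
`q(τ) = τ^d + τ^{d−1} + Σ_{k=2}^d e_k τ^{d−k}`:
`∫₀^∞ [ln q(τ) + (1−d) ln τ − ln(τ+1)] dτ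
  = ∫₀^∞ ∫₀^∞ (1 − e^{−t Σ_{i=2}^d eᵢ τ^{d−i}}) t⁻¹ e^{−t(τ^d+τ^{d−1})} dt dτ`. -/
theorem entropy_levy_khintchine (d : ℕ) (hd : 2 ≤ d) (e : ℕ → ℝ)
    (he : ∀ k, 2 ≤ k → k ≤ d → 0 ≤ e k)
    (hne : ∃ k, 2 ≤ k ∧ k ≤ d ∧ e k ≠ 0) :
    (∫ τ in Set.Ioi (0 : ℝ),
        (Real.log (τ ^ d + τ ^ (d - 1) + ∑ k ∈ Finset.Icc 2 d, e k * τ ^ (d - k))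
          + (1 - (d : ℝ)) * Real.log τ - Real.log (τ + 1))) =
      ∫ τ in Set.Ioi (0 : ℝ), ∫ t in Set.Ioi (0 : ℝ),
        (1 - Real.exp (-(t * ∑ i ∈ Finset.Icc 2 d, e i * τ ^ (d - i)))) * t⁻¹ *
          Real.exp (-(t * (τ ^ d + τ ^ (d - 1)))) := by
  refine entropy_levy_khintchine_general d (one_le_two.trans hd) e fun τ hτ ↦ ?_
  have hsum : 0 ≤ ∑ k ∈ Finset.Icc 2 d, e k * τ ^ (d - k) := Finset.sum_nonneg fun k hk ↦
    mul_nonneg (he k (Finset.mem_Icc.mp hk).1 (Finset.mem_Icc.mp hk).2) (by positivity)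
  positivity
end

section
/- Let d ≥ 2 be an integer and let e₂,…,e_d be nonnegative real numbers, not all zero. Then the subentropy at e₁ = 1, given by the half-axis formula G(1,e₂,…,e_d) = ∫₀^∞ [ 1 − τ^d/(τ^d + τ^{d−1} + Σ_{k=2}^d e_k τ^{d−k}) − 1/(τ+1) ] dτ, admits the Levy–Khintchine representation G(1,e₂,…,e_d) = ∫₀^∞ ∫₀^∞ ( 1 − exp( −t·Σ_{i=2}^d e_i τ^{d−i} ) ) · τ^d · exp( −t(τ^d + τ^{d−1}) ) dt dτ, where both integrals are over (0,∞). -/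
open MeasureTheory Real

/-!
The two sides agree pointwise in `τ`. Write `q(τ) = a + s` with `a = τ ^ d + τ ^ (d - 1)` and
`s = ∑ k ∈ Finset.Icc 2 d, e k * τ ^ (d - k)`. Since `1 - 1 / (τ + 1) = τ ^ d / a`, the integrand
on the left is `τ ^ d * (a⁻¹ - (a + s)⁻¹)`, and `s ↦ a⁻¹ - (a + s)⁻¹` is the Bernstein function
with Lévy measure `exp (-(t * a)) dt`.
-/

theorem integral_exp_neg_mul_sub_exp_neg_mul_Ioi {a b : ℝ} (ha : 0 < a) (hb : 0 < b) :
    ∫ t in Set.Ioi (0 : ℝ), (exp (-a * t) - exp (-b * t)) = a⁻¹ - b⁻¹ := by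
  rw [integral_sub (integrableOn_exp_mul_Ioi (neg_lt_zero.2 ha) 0)
      (integrableOn_exp_mul_Ioi (neg_lt_zero.2 hb) 0),
    integral_exp_mul_Ioi (neg_lt_zero.2 ha), integral_exp_mul_Ioi (neg_lt_zero.2 hb)]
  simp only [mul_zero, exp_zero, neg_div_neg_eq, one_div]

theorem integral_one_sub_exp_mul_exp_Ioi {a s : ℝ} (ha : 0 < a) (has : 0 < a + s) :
    ∫ t in Set.Ioi (0 : ℝ), (1 - exp (-(t * s))) * exp (-(t * a)) = a⁻¹ - (a + s)⁻¹ := by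
  rw [← integral_exp_neg_mul_sub_exp_neg_mul_Ioi ha has]
  congr 1 with t
  rw [sub_mul, one_mul, ← exp_add]
  ring_nf

theorem pow_div_pow_add_pow_pred {K : Type*} [Field K] {x : K} {d : ℕ} (hd : d ≠ 0)
    (hx : x ≠ 0) (hx1 : x + 1 ≠ 0) :
    x ^ d / (x ^ d + x ^ (d - 1)) = 1 - 1 / (x + 1) := by
  obtain ⟨n, rfl⟩ := Nat.exists_eq_add_one_of_ne_zero hd
  have factor : x ^ (n + 1) + x ^ n = x ^ n * (x + 1) := by ring
  rw [Nat.add_sub_cancel, factor]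
  field_simp
  ring

theorem subentropy_integrand_eq_integral {d : ℕ} {τ s : ℝ} (hd : d ≠ 0) (hτ : 0 < τ)
    (hq : 0 < τ ^ d + τ ^ (d - 1) + s) :
    1 - τ ^ d / (τ ^ d + τ ^ (d - 1) + s) - 1 / (τ + 1) =
      ∫ t in Set.Ioi (0 : ℝ),
        (1 - exp (-(t * s))) * τ ^ d * exp (-(t * (τ ^ d + τ ^ (d - 1)))) := by
  have ha : 0 < τ ^ d + τ ^ (d - 1) := by positivity
  calc
    _ = (1 - 1 / (τ + 1)) - τ ^ d / (τ ^ d + τ ^ (d - 1) + s) := sub_right_comm ..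
    _ = ((τ ^ d + τ ^ (d - 1))⁻¹ - (τ ^ d + τ ^ (d - 1) + s)⁻¹) * τ ^ d := by
      rw [← pow_div_pow_add_pow_pred hd hτ.ne' (by positivity)]
      ring
    _ = _ := by
      simp only [mul_right_comm _ (τ ^ d), integral_mul_const,
        integral_one_sub_exp_mul_exp_Ioi ha hq]

theorem pow_add_pow_pred_add_sum_pos {d : ℕ} {e : ℕ → ℝ} (he : ∀ k, 2 ≤ k → k ≤ d → 0 ≤ e k)
    {τ : ℝ} (hτ : 0 < τ) :
    0 < τ ^ d + τ ^ (d - 1) + ∑ k ∈ Finset.Icc 2 d, e k * τ ^ (d - k) := by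
  have sum_nonneg : 0 ≤ ∑ k ∈ Finset.Icc 2 d, e k * τ ^ (d - k) :=
    Finset.sum_nonneg fun k hk =>
      have ⟨two_le, le_d⟩ := Finset.mem_Icc.1 hk
      mul_nonneg (he k two_le le_d) (pow_nonneg hτ.le _)
  positivity

theorem subentropy_levy_khintchine_general {d : ℕ} (hd : d ≠ 0) (e : ℕ → ℝ)
    (hq : ∀ τ : ℝ, 0 < τ →
      0 < τ ^ d + τ ^ (d - 1) + ∑ k ∈ Finset.Icc 2 d, e k * τ ^ (d - k)) :
    (∫ τ in Set.Ioi (0 : ℝ),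
        (1 - τ ^ d / (τ ^ d + τ ^ (d - 1) + ∑ k ∈ Finset.Icc 2 d, e k * τ ^ (d - k))
          - 1 / (τ + 1))) =
      ∫ τ in Set.Ioi (0 : ℝ), ∫ t in Set.Ioi (0 : ℝ),
        (1 - exp (-(t * ∑ i ∈ Finset.Icc 2 d, e i * τ ^ (d - i)))) * τ ^ d *
          exp (-(t * (τ ^ d + τ ^ (d - 1)))) :=
  setIntegral_congr_fun measurableSet_Ioi fun τ hτ =>
    subentropy_integrand_eq_integral hd hτ (hq τ hτ)

/-- **Levy–Khintchine representation of the subentropy at `e₁ = 1`.**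
For `d ≥ 2` and nonnegative `e₂, …, e_d`, not all zero, with
`q(τ) = τ^d + τ^{d−1} + Σ_{k=2}^d e_k τ^{d−k}`:
`∫₀^∞ [1 − τ^d/q(τ) − 1/(τ+1)] dτ
  = ∫₀^∞ ∫₀^∞ (1 − e^{−t Σ_{i=2}^d eᵢ τ^{d−i}}) τ^d e^{−t(τ^d+τ^{d−1})} dt dτ`. -/
theorem subentropy_levy_khintchine (d : ℕ) (hd : 2 ≤ d) (e : ℕ → ℝ)
    (he : ∀ k, 2 ≤ k → k ≤ d → 0 ≤ e k)
    (hne : ∃ k, 2 ≤ k ∧ k ≤ d ∧ e k ≠ 0) :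
    (∫ τ in Set.Ioi (0 : ℝ),
        (1 - τ ^ d / (τ ^ d + τ ^ (d - 1) + ∑ k ∈ Finset.Icc 2 d, e k * τ ^ (d - k))
          - 1 / (τ + 1))) =
      ∫ τ in Set.Ioi (0 : ℝ), ∫ t in Set.Ioi (0 : ℝ),
        (1 - Real.exp (-(t * ∑ i ∈ Finset.Icc 2 d, e i * τ ^ (d - i)))) * τ ^ d *
          Real.exp (-(t * (τ ^ d + τ ^ (d - 1)))) :=
  subentropy_levy_khintchine_general (by lia) e fun _ hτ => pow_add_pow_pred_add_sum_pos he hτ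
end
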